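/- In the second model, the process Y_n := Y + Z̄^{B,r}_{n−1} is 𝔉-adapted and right-continuous, and for every 𝔉-stopping time σ it holds a.s. that Z_n^B(σ) = esssup over 𝔉-stopping times τ ≥ σ of 𝔼(Y_n(τ) | 𝓕_σ). -/

import Mathlib

open MeasureTheory Set Filter
open scoped ENNReal NNReal

noncomputable section

variable {Ω : Type*}

/-- `𝒢^ρ`: the smallest filtration making the `[0,∞]`-valued map `ρ` a stopping time,
`𝒢^ρ_t = σ({ρ ≤ s} : s ≤ t)`. -/
def genFilt (ρ : Ω → ℝ≥0∞) (t : ℝ≥0) : MeasurableSpace Ω :=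
  MeasurableSpace.generateFrom {A | ∃ s : ℝ≥0, s ≤ t ∧ A = {ω | ρ ω ≤ (s : ℝ≥0∞)}}

/-- `𝔄^ρ`: the smallest right-continuous filtration containing `𝔄` for which `ρ` is a
stopping time, i.e. the right-continuous regularization of `t ↦ σ(𝒜_t, 𝒢^ρ_t)`. -/
def rcEnlarge (𝔄 : ℝ≥0 → MeasurableSpace Ω) (ρ : Ω → ℝ≥0∞) (t : ℝ≥0) :
    MeasurableSpace Ω :=
  ⨅ s ∈ Set.Ioi t, (𝔄 s ⊔ genFilt ρ s)

/-- Iterated enlargement `𝔄^{ρ₀,…,ρ_{i-1}}`. -/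
def enrichedFilt (𝔄 : ℝ≥0 → MeasurableSpace Ω) (ρ : ℕ → Ω → ℝ≥0∞) :
    ℕ → ℝ≥0 → MeasurableSpace Ω
  | 0 => 𝔄
  | i + 1 => rcEnlarge (enrichedFilt 𝔄 ρ i) (ρ i)

/-- `ρ : Ω → [0,∞]` is a stopping time with respect to the filtration `𝔄 = (𝒜_t)_{t ≥ 0}`. -/
def IsStoppingTimeE (𝔄 : ℝ≥0 → MeasurableSpace Ω) (ρ : Ω → ℝ≥0∞) : Prop :=
  ∀ t : ℝ≥0, MeasurableSet[𝔄 t] {ω | ρ ω ≤ (t : ℝ≥0∞)}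

/-- The σ-algebra `𝒜_ρ` of events prior to the random time `ρ`. -/
def sigmaAt (𝔄 : ℝ≥0 → MeasurableSpace Ω) (ρ : Ω → ℝ≥0∞) : MeasurableSpace Ω :=
  MeasurableSpace.generateFrom
    {A | ∀ t : ℝ≥0, MeasurableSet[𝔄 t] (A ∩ {ω | ρ ω ≤ (t : ℝ≥0∞)})}

/-- Evaluation `Y(τ)` of a process at a `[0,∞]`-valued random time, with the convention
`Y(∞) := limsup_{t→∞} Y(t)`. -/
def evalAt (Y : ℝ≥0 → Ω → ℝ) (τ : Ω → ℝ≥0∞) (ω : Ω) : ℝ :=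
  if τ ω ≠ ∞ then Y (τ ω).toNNReal ω
  else limsup (fun t : ℝ≥0 => Y t ω) atTop

/-- Right-continuity of a filtration. -/
def RightContinuousFilt (𝔄 : ℝ≥0 → MeasurableSpace Ω) : Prop :=
  ∀ t : ℝ≥0, 𝔄 t = ⨅ s ∈ Set.Ioi t, 𝔄 s

variable {m0 : MeasurableSpace Ω}

/-- `Z` is (a version of) the essential supremum of the family of random variables `F`. -/
def IsEssSupFam (μ : Measure Ω) (F : Set (Ω → ℝ)) (Z : Ω → ℝ) : Prop :=
  (∀ f ∈ F, f ≤ᵐ[μ] Z) ∧ ∀ g : Ω → ℝ, (∀ f ∈ F, f ≤ᵐ[μ] g) → Z ≤ᵐ[μ] g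

/-- The set of strategies `𝒮^n_σ(δ, 𝔄)` (0-indexed: `τ 0` is the first exercise `τ₁`,
`δ 0` is the first waiting time `δ₁`). -/
def IsStrategy (𝔄 : ℝ≥0 → MeasurableSpace Ω) (δ : ℕ → Ω → ℝ≥0∞) (n : ℕ)
    (σ : Ω → ℝ≥0∞) (τ : ℕ → Ω → ℝ≥0∞) : Prop :=
  IsStoppingTimeE 𝔄 (τ 0) ∧ (∀ ω, σ ω ≤ τ 0 ω) ∧
    ∀ i : ℕ, i + 1 < n →
      IsStoppingTimeE (enrichedFilt 𝔄 (fun j ω => τ j ω + δ j ω) (i + 1)) (τ (i + 1)) ∧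
      ∀ ω, τ i ω + δ i ω ≤ τ (i + 1) ω

/-- `Σ_{i=1}^n Y(τ_i)`. -/
def rewardSum (Y : ℝ≥0 → Ω → ℝ) (n : ℕ) (τ : ℕ → Ω → ℝ≥0∞) (ω : Ω) : ℝ :=
  ∑ i ∈ Finset.range n, evalAt Y (τ i) ω

/-- The family of random variables whose essential supremum is `Z_n^{δ,𝔄}(σ)`. -/
def gainFam (μ : Measure Ω) (Y : ℝ≥0 → Ω → ℝ) (𝔄 : ℝ≥0 → MeasurableSpace Ω)
    (δ : ℕ → Ω → ℝ≥0∞) (n : ℕ) (σ : Ω → ℝ≥0∞) : Set (Ω → ℝ) :=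
  {g | ∃ τ : ℕ → Ω → ℝ≥0∞, IsStrategy 𝔄 δ n σ τ ∧
    g = μ[rewardSum Y n τ | sigmaAt 𝔄 σ]}

/-- The family of random variables whose essential supremum is `Z_n^{δ,𝔄}(σ)_disc`. -/
def gainFamDisc (μ : Measure Ω) (Y : ℝ≥0 → Ω → ℝ) (𝔄 : ℝ≥0 → MeasurableSpace Ω)
    (δ : ℕ → Ω → ℝ≥0∞) (n : ℕ) (σ : Ω → ℝ≥0∞) : Set (Ω → ℝ) :=
  {g | ∃ τ : ℕ → Ω → ℝ≥0∞, IsStrategy 𝔄 δ n σ τ ∧ (Set.range (τ 0)).Countable ∧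
    g = μ[rewardSum Y n τ | sigmaAt 𝔄 σ]}

/-- The hitting time `ρ_τ^B = inf{t > τ : X(t) ∈ B}` of `B` strictly after the random time `τ`. -/
def hitAfterE (X : ℝ≥0 → Ω → ℝ) (B : Set ℝ) (τ : Ω → ℝ≥0∞) (ω : Ω) : ℝ≥0∞ :=
  ⨅ u ∈ {u : ℝ≥0 | τ ω < (u : ℝ≥0∞) ∧ X u ω ∈ B}, (u : ℝ≥0∞)

/-- The set of strategies `𝒮^n_σ(B)` of the second model. -/
def IsStrategyB (𝔉 : ℝ≥0 → MeasurableSpace Ω) (X : ℝ≥0 → Ω → ℝ) (B : ℕ → Set ℝ)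
    (n : ℕ) (σ : Ω → ℝ≥0∞) (τ : ℕ → Ω → ℝ≥0∞) : Prop :=
  (∀ i < n, IsStoppingTimeE 𝔉 (τ i)) ∧ (∀ ω, σ ω ≤ τ 0 ω) ∧
    ∀ i : ℕ, i + 1 < n → ∀ ω, hitAfterE X (B i) (τ i) ω ≤ τ (i + 1) ω

/-- The family of random variables whose essential supremum is `Z_n^B(σ)` (second model). -/
def gainFamB (μ : Measure Ω) (Y : ℝ≥0 → Ω → ℝ) (𝔉 : ℝ≥0 → MeasurableSpace Ω)
    (X : ℝ≥0 → Ω → ℝ) (B : ℕ → Set ℝ) (n : ℕ) (σ : Ω → ℝ≥0∞) : Set (Ω → ℝ) :=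
  {g | ∃ τ : ℕ → Ω → ℝ≥0∞, IsStrategyB 𝔉 X B n σ τ ∧
    g = μ[rewardSum Y n τ | sigmaAt 𝔉 σ]}

open scoped Topology

/-! A strategy for `n` exercises is a first exercise `τ` followed by a strategy for the other
`n - 1`, started at the hitting time `ρ_τ` of `B 0` after `τ`. So for a *deterministic* first
exercise `t` the best that can be achieved is `U t = Y t + 𝔼(Z_{n-1}(ρ_t) | 𝓕_t)`: the bound is the
tower property, and gluing countably many strategies along events of `𝓕_{ρ_t}` gives `ε`-optimal
ones. Gluing again along the values of `τ` extends this to first exercises with countable range.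

A general first exercise `τ` is approximated from above by its dyadic discretisations. The later
exercises are postponed only as far as the later start forces them to be, and since hitting times
are right-continuous in their starting time, the postponed exercises converge to the original ones.
Rewards then converge by dominated convergence, the values `U` because they are dominated by
conditional expectations of one integrable variable, hence uniformly integrable. At `τ = ∞`
the convention `U ∞ = limsup U t` has to agree with the reward `n Y(∞)` of never exercising: this
holds because `𝔼(Z_{n-1}(ρ_t) | 𝓕_t)` is squeezed between conditional expectations of `(n - 1) Y(∞)`
and `(n - 1) sup_{s ≥ a} Y(s)`, for `t ≥ a`, whose limits are given by Lévy's upward theorem. -/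

section ConditionalExpectation

variable {μ : Measure Ω}

lemma measurable_of_ae_eq {m : MeasurableSpace Ω} (hnull : ∀ A, μ A = 0 → MeasurableSet[m] A)
    {f g : Ω → ℝ} (hfg : f =ᵐ[μ] g) (hg : Measurable[m] g) : Measurable[m] f := by
  intro s hs
  have hsymm : μ (symmDiff (f ⁻¹' s) (g ⁻¹' s)) = 0 :=
    measure_symmDiff_eq_zero_iff.2 (hfg.preimage s)
  rw [← symmDiff_symmDiff_cancel_right (g ⁻¹' s) (f ⁻¹' s)]
  exact (hnull _ hsymm).symmDiff (hg hs)

lemma le_of_forall_condExp_le_of_tendsto_eLpNorm {m : MeasurableSpace Ω} {u : ℕ → Ω → ℝ}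
    {v z : Ω → ℝ} (hu : ∀ k, Integrable (u k) μ) (hv : Integrable v μ)
    (hlim : Tendsto (fun k => eLpNorm (u k - v) 1 μ) atTop (𝓝 0))
    (h : ∀ k, μ[u k | m] ≤ᵐ[μ] z) : μ[v | m] ≤ᵐ[μ] z := by
  have hL1 : Tendsto (fun k => eLpNorm (μ[u k | m] - μ[v | m]) 1 μ) atTop (𝓝 0) := by
    refine tendsto_of_tendsto_of_tendsto_of_le_of_le tendsto_const_nhds hlim
      (fun k => zero_le) fun k => ?_
    rw [← eLpNorm_congr_ae (condExp_sub (hu k) hv m)]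
    exact eLpNorm_condExp_le_eLpNorm _ le_rfl
  obtain ⟨ns, -, hns⟩ := (tendstoInMeasure_of_tendsto_eLpNorm one_ne_zero
    (fun k => integrable_condExp.1) integrable_condExp.1 hL1).exists_seq_tendsto_ae
  filter_upwards [hns, ae_all_iff.2 h] with ω hω hle
  exact le_of_tendsto' hω fun k => hle (ns k)

lemma tendsto_eLpNorm_of_le_condExp [IsFiniteMeasure μ] {g : Ω → ℝ} (hg : Integrable g μ)
    {m : ℕ → MeasurableSpace Ω} (hm : ∀ k, m k ≤ m0) {u : ℕ → Ω → ℝ} {v : Ω → ℝ}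
    (hu : ∀ k, AEStronglyMeasurable (u k) μ) (hpos : ∀ k, 0 ≤ᵐ[μ] u k)
    (hle : ∀ k, u k ≤ᵐ[μ] μ[g | m k])
    (hlim : ∀ᵐ ω ∂μ, Tendsto (fun k => u k ω) atTop (𝓝 (v ω))) :
    Integrable v μ ∧ Tendsto (fun k => eLpNorm (u k - v) 1 μ) atTop (𝓝 0) := by
  obtain ⟨-, hunif, C, hC⟩ := hg.uniformIntegrable_condExp hm
  have hnorm : ∀ k, ∀ᵐ ω ∂μ, ‖u k ω‖ ≤ ‖(μ[g | m k]) ω‖ := fun k => by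
    filter_upwards [hpos k, hle k] with ω h0 h1
    exact abs_le_abs_of_nonneg h0 h1
  have hUI : UniformIntegrable u 1 μ := by
    refine ⟨hu, fun ε hε => ?_, C, fun k => (eLpNorm_mono_ae (hnorm k)).trans (hC k)⟩
    obtain ⟨δ, hδ, h⟩ := hunif hε
    refine ⟨δ, hδ, fun k s hs hμs => (eLpNorm_mono_ae ?_).trans (h k s hs hμs)⟩
    filter_upwards [hnorm k] with ω hω
    rw [norm_indicator_eq_indicator_norm, norm_indicator_eq_indicator_norm]
    exact indicator_le_indicator hω
  have hv : MemLp v 1 μ := hUI.memLp_of_ae_tendsto hlim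
  exact ⟨memLp_one_iff_integrable.1 hv,
    tendsto_Lp_finite_of_tendsto_ae le_rfl (by simp) hu hv hUI.2.1 hlim⟩

lemma condExp_ae_eq_on {m : MeasurableSpace Ω} {f g : Ω → ℝ} (hf : Integrable f μ)
    (hg : Integrable g μ) {A : Set Ω} (hA : MeasurableSet[m] A) (hA0 : MeasurableSet[m0] A)
    (hfg : EqOn f g A) : ∀ᵐ ω ∂μ, ω ∈ A → (μ[f | m]) ω = (μ[g | m]) ω := by
  have hzero : f - g =ᵐ[μ.restrict A] 0 :=
    (ae_restrict_mem hA0).mono fun ω hω => sub_eq_zero.2 (hfg hω)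
  filter_upwards [condExp_sub hf hg m,
    (ae_restrict_iff' hA0).1 (condExp_ae_eq_restrict_zero hA hzero)] with ω hsub h hω
  have := h hω
  rw [hsub] at this
  exact sub_eq_zero.1 this

/- A junk case is covered as well: if `m` is not a sub-σ-algebra of `m0`, both sides vanish. -/
lemma condExp_le_condExp_of_condExp_le [IsFiniteMeasure μ] {m m' : MeasurableSpace Ω}
    (hm' : m' ≤ m0) (hmm' : m ≤ m0 → m ≤ m') {f g : Ω → ℝ} (hg : Integrable g μ)
    (h : μ[f | m'] ≤ᵐ[μ] g) : μ[f | m] ≤ᵐ[μ] μ[g | m] := by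
  by_cases hm : m ≤ m0
  · exact (condExp_condExp_of_le (hmm' hm) hm').symm.le.trans (condExp_mono integrable_condExp hg h)
  · simp [condExp_of_not_le hm, EventuallyLE.refl]

lemma condExp_le_condExp_add_of_le_condExp_add [IsFiniteMeasure μ] {m m' : MeasurableSpace Ω}
    (hm' : m' ≤ m0) (hmm' : m ≤ m0 → m ≤ m') {f g : Ω → ℝ} (hg : Integrable g μ) {ε : ℝ}
    (hε : 0 ≤ ε) (h : g ≤ᵐ[μ] fun ω => (μ[f | m']) ω + ε) :
    μ[g | m] ≤ᵐ[μ] fun ω => (μ[f | m]) ω + ε := by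
  by_cases hm : m ≤ m0
  · filter_upwards [condExp_mono (m := m) hg (integrable_condExp.add (integrable_const ε)) h,
      condExp_add (integrable_condExp (f := f) (m := m')) (integrable_const ε) m,
      condExp_condExp_of_le (f := f) (μ := μ) (hmm' hm) hm'] with ω hle hadd htower
    rwa [hadd, Pi.add_apply, htower, condExp_const hm] at hle
  · simp [condExp_of_not_le hm, EventuallyLE, hε]

lemma ae_le_of_forall_pos_le_add {f g : Ω → ℝ} (h : ∀ ε > 0, f ≤ᵐ[μ] fun ω => g ω + ε) :
    f ≤ᵐ[μ] g := by
  obtain ⟨ε, -, hε, hlim⟩ := exists_seq_strictAnti_tendsto (0 : ℝ)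
  filter_upwards [ae_all_iff.2 fun k => h (ε k) (hε k)] with ω hω
  exact ge_of_tendsto' (by simpa using hlim.const_add (g ω)) hω

lemma ae_of_forall_ae_eq {β : Type*} {ρ : Ω → β} (hρ : (range ρ).Countable) {p : Ω → Prop}
    (h : ∀ c, ∀ᵐ ω ∂μ, ρ ω = c → p ω) : ∀ᵐ ω ∂μ, p ω := by
  filter_upwards [(ae_ball_iff hρ).2 fun c _ => h c] with ω hω
  exact hω _ (mem_range_self ω) rfl

end ConditionalExpectation

section Martingale

variable {μ : Measure Ω} [IsFiniteMeasure μ] {ι : Type*} [LinearOrder ι] {ℱ : Filtration ι m0}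
  {ξ : Ω → ℝ}

/- Adding the indices in increasing order, the part of the exceedance event gained with `i` is
`ℱ i`-measurable, and on it `ξ` integrates to the same value as `μ[ξ | ℱ i] ≥ c`. -/
lemma mul_measureReal_exists_mem_le_condExp_le (hξ : Integrable ξ μ) (c : ℝ) (s : Finset ι) :
    c * μ.real {ω | ∃ i ∈ s, c ≤ (μ[ξ | ℱ i]) ω}
      ≤ ∫ ω in {ω | ∃ i ∈ s, c ≤ (μ[ξ | ℱ i]) ω}, ξ ω ∂μ := by
  induction s using Finset.induction_on_max with
  | empty => simp
  | insert i s hi ih =>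
    set E : Set Ω := {ω | ∃ j ∈ s, c ≤ (μ[ξ | ℱ j]) ω} with hE
    set G : Set Ω := {ω | c ≤ (μ[ξ | ℱ i]) ω} with hG
    have hGm : MeasurableSet[ℱ i] G :=
      measurableSet_le measurable_const stronglyMeasurable_condExp.measurable
    have hEm : MeasurableSet[ℱ i] E := by
      have : E = ⋃ j ∈ s, {ω | c ≤ (μ[ξ | ℱ j]) ω} := by ext; simp [hE]
      rw [this]
      exact Finset.measurableSet_biUnion s fun j hj => ℱ.mono (hi j hj).le _
        (measurableSet_le measurable_const stronglyMeasurable_condExp.measurable)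
    have hsplit : {ω | ∃ j ∈ insert i s, c ≤ (μ[ξ | ℱ j]) ω} = E ∪ G \ E := by
      ext; simp [hE, hG, or_comm]
    have hgain : c * μ.real (G \ E) ≤ ∫ ω in G \ E, ξ ω ∂μ := by
      rw [← setIntegral_condExp (ℱ.le i) hξ (hGm.diff hEm)]
      exact setIntegral_ge_of_const_le_real (ℱ.le i _ (hGm.diff hEm)) (measure_ne_top _ _)
        (fun ω hω => hω.1) integrable_condExp.integrableOn
    rw [hsplit, measureReal_union disjoint_sdiff_right (ℱ.le i _ (hGm.diff hEm)),
      setIntegral_union disjoint_sdiff_right (ℱ.le i _ (hGm.diff hEm)) hξ.integrableOn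
        hξ.integrableOn, mul_add]
    exact add_le_add ih hgain

lemma abs_condExp_sub_le (hξ : Integrable ξ μ) {i j : ι} (hji : j ≤ i) :
    ∀ᵐ ω ∂μ, |(μ[ξ | ℱ i]) ω - ξ ω|
      ≤ (μ[|μ[ξ | ℱ j] - ξ| | ℱ i]) ω + |(μ[ξ | ℱ j]) ω - ξ ω| := by
  have hj : μ[μ[ξ | ℱ j] | ℱ i] = μ[ξ | ℱ j] := condExp_of_stronglyMeasurable (ℱ.le i)
    (stronglyMeasurable_condExp.mono (ℱ.mono hji)) integrable_condExp
  filter_upwards [condExp_sub (integrable_condExp (m := ℱ j)) hξ (ℱ i),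
    abs_condExp_ae_le_condExp_abs (μ := μ) (m := ℱ i) (μ[ξ | ℱ j] - ξ)] with ω hsub habs
  rw [hj] at hsub
  rw [Pi.abs_apply, hsub, Pi.sub_apply, abs_sub_comm] at habs
  exact (abs_sub_le _ ((μ[ξ | ℱ j]) ω) _).trans (add_le_add habs le_rfl)

variable [Countable ι]

lemma mul_measure_exists_le_condExp_le (hξ : Integrable ξ μ) (hpos : 0 ≤ᵐ[μ] ξ) (c : ℝ≥0) :
    c * μ {ω | ∃ i, (c : ℝ) ≤ (μ[ξ | ℱ i]) ω} ≤ ENNReal.ofReal (∫ ω, ξ ω ∂μ) := by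
  have hU : {ω | ∃ i, (c : ℝ) ≤ (μ[ξ | ℱ i]) ω}
      = ⋃ s : Finset ι, {ω | ∃ i ∈ s, (c : ℝ) ≤ (μ[ξ | ℱ i]) ω} := by
    ext ω
    simp only [mem_ofPred_eq, mem_iUnion]
    exact ⟨fun ⟨i, hi⟩ => ⟨{i}, i, by simp, hi⟩, fun ⟨_, i, _, hi⟩ => ⟨i, hi⟩⟩
  have hdir : Directed (· ⊆ ·)
      fun s : Finset ι => {ω | ∃ i ∈ s, (c : ℝ) ≤ (μ[ξ | ℱ i]) ω} :=
    Monotone.directed_le fun s t hst ω ⟨i, hi, h⟩ => ⟨i, (hst : s ⊆ t) hi, h⟩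
  rw [hU, hdir.measure_iUnion, ENNReal.mul_iSup]
  refine iSup_le fun s => ?_
  have h := (mul_measureReal_exists_mem_le_condExp_le (ℱ := ℱ) hξ c s).trans
    (setIntegral_le_integral hξ hpos)
  rw [← ENNReal.ofReal_coe_nnreal, ← ofReal_measureReal, ← ENNReal.ofReal_mul c.coe_nonneg]
  exact ENNReal.ofReal_le_ofReal h

lemma mul_measure_exists_le_abs_condExp_sub_le (hξ : Integrable ξ μ) (j : ι) (c : ℝ≥0) :
    c * μ {ω | ∃ i ≥ j, 2 * (c : ℝ) ≤ |(μ[ξ | ℱ i]) ω - ξ ω|}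
      ≤ 2 * eLpNorm (μ[ξ | ℱ j] - ξ) 1 μ := by
  set η : Ω → ℝ := |μ[ξ | ℱ j] - ξ|
  have hηi : Integrable η μ := (integrable_condExp.sub hξ).abs
  have hη0 : 0 ≤ᵐ[μ] η := Eventually.of_forall fun ω => abs_nonneg _
  have hηn : ENNReal.ofReal (∫ ω, η ω ∂μ) = eLpNorm (μ[ξ | ℱ j] - ξ) 1 μ := by
    rw [ofReal_integral_eq_lintegral_ofReal hηi hη0, eLpNorm_one_eq_lintegral_enorm]
    exact lintegral_congr fun ω => (Real.enorm_eq_ofReal_abs _).symm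
  have hcover : ∀ᵐ ω ∂μ, ω ∈ {ω | ∃ i ≥ j, 2 * (c : ℝ) ≤ |(μ[ξ | ℱ i]) ω - ξ ω|} →
      ω ∈ {ω | ∃ i, (c : ℝ) ≤ (μ[η | ℱ i]) ω} ∪ {ω | (c : ℝ) ≤ η ω} := by
    filter_upwards [ae_all_iff.2 fun i : Ici j => abs_condExp_sub_le hξ i.2] with ω hω
    rintro ⟨i, hij, hi⟩
    by_contra hcon
    simp only [mem_union, mem_ofPred_eq, not_or, not_exists, not_le] at hcon
    have := hω ⟨i, hij⟩
    linarith [hcon.1 i, show |(μ[ξ | ℱ j]) ω - ξ ω| < c from hcon.2]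
  calc c * μ {ω | ∃ i ≥ j, 2 * (c : ℝ) ≤ |(μ[ξ | ℱ i]) ω - ξ ω|}
      ≤ c * μ {ω | ∃ i, (c : ℝ) ≤ (μ[η | ℱ i]) ω} + c * μ {ω | (c : ℝ) ≤ η ω} := by
        rw [← mul_add]
        gcongr
        exact (measure_mono_ae hcover).trans (measure_union_le _ _)
    _ ≤ ENNReal.ofReal (∫ ω, η ω ∂μ) + ENNReal.ofReal (∫ ω, η ω ∂μ) := by
        refine add_le_add (mul_measure_exists_le_condExp_le hηi hη0 c) ?_
        rw [← ENNReal.ofReal_coe_nnreal, ← ofReal_measureReal,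
          ← ENNReal.ofReal_mul c.coe_nonneg]
        exact ENNReal.ofReal_le_ofReal (mul_meas_ge_le_integral_of_nonneg hη0 hηi c)
    _ = 2 * eLpNorm (μ[ξ | ℱ j] - ξ) 1 μ := by rw [hηn, two_mul]

/- Along a cofinal sequence of indices Lévy's upward theorem gives `L¹`-convergence; the maximal
inequality for the error `μ[ξ | ℱ j] - ξ` makes it uniform in all later indices. -/
lemma ae_tendsto_condExp [Nonempty ι] (hξ : Integrable ξ μ)
    (hm : StronglyMeasurable[⨆ i, ℱ i] ξ) :
    ∀ᵐ ω ∂μ, Tendsto (fun i => (μ[ξ | ℱ i]) ω) atTop (𝓝 (ξ ω)) := by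
  obtain ⟨u, hu, hlim⟩ := Filter.exists_seq_monotone_tendsto_atTop_atTop ι
  let 𝒢 : Filtration ℕ m0 := ⟨fun n => ℱ (u n), ℱ.mono'.comp hu, fun n => ℱ.le _⟩
  have hsup : ⨆ n, 𝒢 n = ⨆ i, ℱ i := ℱ.mono'.iSup_comp_tendsto_atTop hlim
  have hL1 : Tendsto (fun n => 2 * eLpNorm (μ[ξ | ℱ (u n)] - ξ) 1 μ) atTop (𝓝 0) := by
    simpa using ENNReal.Tendsto.const_mul (a := 2)
      (hξ.tendsto_eLpNorm_condExp (ℱ := 𝒢) (by rwa [hsup])) (Or.inr (by simp))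
  have hae : ∀ c : ℝ≥0, 0 < c →
      ∀ᵐ ω ∂μ, ∃ j, ∀ i ≥ j, |(μ[ξ | ℱ i]) ω - ξ ω| < 2 * (c : ℝ) := by
    intro c hc
    have hnull : c * μ {ω | ∀ j, ∃ i ≥ j, 2 * (c : ℝ) ≤ |(μ[ξ | ℱ i]) ω - ξ ω|} ≤ 0 :=
      ge_of_tendsto' hL1 fun n => (mul_le_mul_right (measure_mono (ofPred_subset_ofPred.2
        fun ω hω => hω (u n))) _).trans (mul_measure_exists_le_abs_condExp_sub_le hξ (u n) c)
    simpa [ae_iff, hc.ne'] using hnull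
  obtain ⟨c, -, hc, hc0⟩ := exists_seq_strictAnti_tendsto (0 : ℝ≥0)
  filter_upwards [ae_all_iff.2 fun n => hae (c n) (hc n)] with ω hω
  rw [Metric.tendsto_atTop]
  intro ε hε
  have hε' : ∀ᶠ n in atTop, (c n : ℝ) < ε / 2 :=
    ((NNReal.tendsto_coe.2 hc0).eventually_lt_const (by simpa using hε))
  obtain ⟨n, hn⟩ := hε'.exists
  obtain ⟨j, hj⟩ := hω n
  exact ⟨j, fun i hi => (hj i hi).trans (by linarith)⟩

end Martingale

section EssSup

variable {μ : Measure Ω}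

/- The sequence maximises `∫⁻ ⨆ j, f j` among all sequences in the family. -/
lemma exists_seq_forall_ae_le_iSup {F : Set (Ω → ℝ≥0∞)} (hne : F.Nonempty)
    (hF : ∀ f ∈ F, Measurable f) {g : Ω → ℝ≥0∞} (hg : ∫⁻ ω, g ω ∂μ ≠ ∞)
    (hle : ∀ f ∈ F, f ≤ᵐ[μ] g) :
    ∃ f : ℕ → Ω → ℝ≥0∞, (∀ j, f j ∈ F) ∧ ∀ h ∈ F, h ≤ᵐ[μ] fun ω => ⨆ j, f j ω := by
  let I : (ℕ → F) → ℝ≥0∞ := fun s => ∫⁻ ω, ⨆ j, (s j).1 ω ∂μ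
  obtain ⟨f₀, hf₀⟩ := hne
  obtain ⟨u, -, hu, hmem⟩ := exists_seq_tendsto_sSup (S := range I)
    ⟨_, fun _ => ⟨f₀, hf₀⟩, rfl⟩ (OrderTop.bddAbove _)
  choose s hs using hmem
  let f : ℕ → F := fun j => s j.unpair.1 j.unpair.2
  have hmax : ∀ r, I r ≤ I f := by
    refine fun r => (le_sSup (mem_range_self r)).trans (le_of_tendsto' hu fun n => ?_)
    rw [← hs n]
    refine lintegral_mono fun ω => iSup_le fun j => le_iSup_of_le (Nat.pair n j) ?_
    simp [f]
  have hfin : I f ≠ ∞ := by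
    refine ne_top_of_le_ne_top hg (lintegral_mono_ae ?_)
    filter_upwards [ae_all_iff.2 fun j => hle _ (f j).2] with ω hω
    exact iSup_le hω
  refine ⟨fun j => (f j).1, fun j => (f j).2, fun h hh => ?_⟩
  let r : ℕ → F := fun j => Nat.casesOn j ⟨h, hh⟩ f
  have hfr : (fun ω => ⨆ j, (f j).1 ω) ≤ fun ω => ⨆ j, (r j).1 ω :=
    fun ω => iSup_le fun j => le_iSup (fun j => (r j).1 ω) (j + 1)
  filter_upwards [ae_eq_of_ae_le_of_lintegral_le (Eventually.of_forall hfr) hfin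
    (Measurable.iSup fun j => hF _ (r j).2).aemeasurable (hmax r)] with ω hω
  rw [hω]
  exact le_iSup (fun j => (r j).1 ω) 0

namespace IsEssSupFam

variable {F : Set (Ω → ℝ)} {Z : Ω → ℝ}

/- The sigmoid makes the family bounded without changing its order. -/
lemma exists_seq_isLUB [IsFiniteMeasure μ] (hZ : IsEssSupFam μ F Z) (hne : F.Nonempty)
    (hF : ∀ f ∈ F, Measurable f) :
    ∃ f : ℕ → Ω → ℝ, (∀ j, f j ∈ F) ∧ ∀ᵐ ω ∂μ, IsLUB (range fun j => f j ω) (Z ω) := by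
  let φ : ℝ → ℝ≥0∞ := fun x => ENNReal.ofReal x.sigmoid
  have hφ : StrictMono φ := fun x y hxy =>
    (ENNReal.ofReal_lt_ofReal_iff (Real.sigmoid_pos y)).2 (Real.sigmoid_strictMono hxy)
  obtain ⟨g, hg, hsup⟩ := exists_seq_forall_ae_le_iSup (μ := μ) (F := (φ ∘ ·) '' F) (g := 1)
    (hne.image _) (forall_mem_image.2 fun f hf => hφ.monotone.measurable.comp (hF f hf))
    (by simp) (forall_mem_image.2 fun f _ => Eventually.of_forall fun ω =>
      ENNReal.ofReal_le_one.2 (Real.sigmoid_le_one _))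
  choose f hf hfg using hg
  have hle : ∀ᵐ ω ∂μ, ∀ j, f j ω ≤ Z ω := ae_all_iff.2 fun j => hZ.1 _ (hf j)
  have hup : ∀ h ∈ F, h ≤ᵐ[μ] fun ω => ⨆ j, f j ω := by
    intro h hh
    filter_upwards [hle, hsup _ (mem_image_of_mem _ hh)] with ω hω hhω
    refine hφ.le_iff_le.1 (hhω.trans (iSup_le fun j => ?_))
    rw [← hfg j]
    exact hφ.monotone (le_ciSup ⟨Z ω, forall_mem_range.2 hω⟩ j)
  refine ⟨f, hf, ?_⟩
  filter_upwards [hle, hZ.2 _ hup] with ω hω hZω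
  exact ⟨forall_mem_range.2 hω, fun b hb => hZω.trans (ciSup_le fun j => hb ⟨j, rfl⟩)⟩

end IsEssSupFam

lemma exists_measurable_nat_sub_lt {m : MeasurableSpace Ω} {f : ℕ → Ω → ℝ}
    (hf : ∀ j, Measurable[m] (f j)) {Z : Ω → ℝ}
    (hZ : ∀ᵐ ω ∂μ, IsLUB (range fun j => f j ω) (Z ω)) {ε : ℝ} (hε : 0 < ε) :
    ∃ K : Ω → ℕ, Measurable[m] K ∧ ∀ᵐ ω ∂μ, Z ω - ε < f (K ω) ω := by
  classical
  set S : Ω → ℝ := fun ω => ⨆ j, f j ω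
  let p : Ω → ℕ → Prop := fun ω j => (∃ i, S ω - ε < f i ω) → S ω - ε < f j ω
  have hp : ∀ ω, ∃ j, p ω j := fun ω => by
    by_cases h : ∃ i, S ω - ε < f i ω
    · exact h.imp fun j hj _ => hj
    · exact ⟨0, fun h' => absurd h' h⟩
  have hm : ∀ j, MeasurableSet[m] {ω | S ω - ε < f j ω} := fun j =>
    measurableSet_lt ((Measurable.iSup hf).sub_const ε) (hf j)
  have hpm : ∀ j, MeasurableSet[m] {ω | p ω j} := fun j =>
    (measurableSet_setOfPred.2 (Measurable.exists fun i => measurableSet_setOfPred.1 (hm i))).imp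
      (hm j)
  refine ⟨fun ω => Nat.find (hp ω), measurable_find hp hpm, ?_⟩
  filter_upwards [hZ] with ω hω
  have hSZ : S ω = Z ω := hω.ciSup_eq
  obtain ⟨_, ⟨i, rfl⟩, hi, -⟩ := hω.exists_between (sub_lt_self (Z ω) hε)
  have hfind := Nat.find_spec (hp ω) ⟨i, by rwa [hSZ]⟩
  rwa [← hSZ]

end EssSup

section StoppingTime

variable {𝔉 : ℝ≥0 → MeasurableSpace Ω} {σ τ ρ : Ω → ℝ≥0∞} {A : Set Ω}

lemma measurableSet_sigmaAt_of_forall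
    (h : ∀ t : ℝ≥0, MeasurableSet[𝔉 t] (A ∩ {ω | σ ω ≤ t})) : MeasurableSet[sigmaAt 𝔉 σ] A :=
  MeasurableSpace.measurableSet_generateFrom h

lemma isStoppingTimeE_const (c : ℝ≥0∞) : IsStoppingTimeE 𝔉 fun _ => c :=
  fun t => by by_cases h : c ≤ t <;> simp [h]

lemma isStoppingTimeE_of_measurableSet_lt (hmono : Monotone 𝔉) (hrc : RightContinuousFilt 𝔉)
    (h : ∀ t : ℝ≥0, MeasurableSet[𝔉 t] {ω | σ ω < t}) : IsStoppingTimeE 𝔉 σ := by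
  intro t
  rw [hrc t]
  simp only [MeasurableSpace.measurableSet_iInf]
  intro s hs
  obtain ⟨u, -, hu, hu'⟩ := exists_seq_strictAnti_tendsto' (mem_Ioi.1 hs)
  have hinter : {ω | σ ω ≤ t} = ⋂ n, {ω | σ ω < u n} := by
    ext ω
    simp only [mem_ofPred_eq, mem_iInter]
    exact ⟨fun hω n => hω.trans_lt (ENNReal.coe_lt_coe.2 (hu n).1),
      fun hω => ge_of_tendsto' (ENNReal.tendsto_coe.2 hu') fun n => (hω n).le⟩
  rw [hinter]
  exact MeasurableSet.iInter fun n => hmono (hu n).2.le _ (h (u n))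

namespace IsStoppingTimeE

protected lemma max (hσ : IsStoppingTimeE 𝔉 σ) (hτ : IsStoppingTimeE 𝔉 τ) :
    IsStoppingTimeE 𝔉 fun ω => max (σ ω) (τ ω) := by
  intro t
  simp only [max_le_iff, ofPred_and]
  exact (hσ t).inter (hτ t)

lemma measurableSet_inter_le (hσ : IsStoppingTimeE 𝔉 σ) (hA : MeasurableSet[sigmaAt 𝔉 σ] A)
    (t : ℝ≥0) : MeasurableSet[𝔉 t] (A ∩ {ω | σ ω ≤ t}) := by
  induction hA with
  | basic _ hu => exact hu t
  | empty => simp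
  | compl u _ ih =>
    have : uᶜ ∩ {ω | σ ω ≤ t} = {ω | σ ω ≤ t} \ (u ∩ {ω | σ ω ≤ t}) := by ext ω; simp; tauto
    rw [this]
    exact (hσ t).diff ih
  | iUnion f _ ih =>
    rw [iUnion_inter]
    exact MeasurableSet.iUnion ih

protected lemma measurable (hmono : Monotone 𝔉) (hσ : IsStoppingTimeE 𝔉 σ) :
    Measurable[sigmaAt 𝔉 σ] σ := by
  refine measurable_of_Iic fun c => measurableSet_sigmaAt_of_forall fun t => ?_
  have : σ ⁻¹' Iic c ∩ {ω | σ ω ≤ t} = {ω | σ ω ≤ (min c t).toNNReal} := by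
    ext ω; simp [ENNReal.coe_toNNReal (min_lt_of_right_lt ENNReal.coe_lt_top).ne]
  rw [this]
  exact hmono (ENNReal.toNNReal_mono ENNReal.coe_ne_top (min_le_right _ _)) _ (hσ _)

lemma measurable_of_le (hσ : IsStoppingTimeE 𝔉 σ) (hle : ∀ t, 𝔉 t ≤ m0) : Measurable σ := by
  refine measurable_of_Iic fun c => ?_
  induction c with
  | top => simp
  | coe t => exact hle t _ (hσ t)

lemma sigmaAt_mono (hσ : IsStoppingTimeE 𝔉 σ) (hτ : IsStoppingTimeE 𝔉 τ) (hστ : σ ≤ τ) :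
    sigmaAt 𝔉 σ ≤ sigmaAt 𝔉 τ := by
  refine fun A hA => measurableSet_sigmaAt_of_forall fun t => ?_
  have : A ∩ {ω | τ ω ≤ t} = A ∩ {ω | σ ω ≤ t} ∩ {ω | τ ω ≤ t} := by
    ext ω; simpa using fun h _ => (hστ ω).trans h
  rw [this]
  exact (hσ.measurableSet_inter_le hA t).inter (hτ t)

protected lemma measurableSet_lt (hmono : Monotone 𝔉) (hσ : IsStoppingTimeE 𝔉 σ) (t : ℝ≥0) :
    MeasurableSet[𝔉 t] {ω | σ ω < t} := by
  have : {ω | σ ω < t} = σ ⁻¹' Iio (t : ℝ≥0∞) ∩ {ω | σ ω ≤ t} := by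
    ext ω; simpa using fun h => h.le
  rw [this]
  exact hσ.measurableSet_inter_le (hσ.measurable hmono measurableSet_Iio) t

protected lemma comp (hmono : Monotone 𝔉) (hσ : IsStoppingTimeE 𝔉 σ) {g : ℝ≥0∞ → ℝ≥0∞}
    (hg : Measurable g) (hle : ∀ x, x ≤ g x) : IsStoppingTimeE 𝔉 fun ω => g (σ ω) := by
  intro t
  have : {ω | g (σ ω) ≤ t} = σ ⁻¹' (g ⁻¹' Iic (t : ℝ≥0∞)) ∩ {ω | σ ω ≤ t} := by
    ext ω; simpa using (hle _).trans
  rw [this]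
  exact hσ.measurableSet_inter_le (hσ.measurable hmono (hg measurableSet_Iic)) t

lemma glue {ι : Type*} [Countable ι] {J : Ω → ι} {T : ι → Ω → ℝ≥0∞}
    (hT : ∀ i, IsStoppingTimeE 𝔉 (T i)) (hJ : ∀ i, MeasurableSet[sigmaAt 𝔉 (T i)] (J ⁻¹' {i})) :
    IsStoppingTimeE 𝔉 fun ω => T (J ω) ω := by
  intro t
  have : {ω | T (J ω) ω ≤ t} = ⋃ i, J ⁻¹' {i} ∩ {ω | T i ω ≤ t} := by ext ω; simp
  rw [this]
  exact MeasurableSet.iUnion fun i => (hT i).measurableSet_inter_le (hJ i) t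

lemma sigmaAt_le {μ : Measure Ω} (hσ : IsStoppingTimeE 𝔉 σ) (hle : ∀ t, 𝔉 t ≤ m0)
    (hnull : ∀ A, μ A = 0 → MeasurableSet[𝔉 0] A) (hfin : ∀ᵐ ω ∂μ, σ ω < ∞) :
    sigmaAt 𝔉 σ ≤ m0 := by
  intro A hA
  have hcover : A = (⋃ N : ℕ, A ∩ {ω | σ ω ≤ ((N : ℝ≥0) : ℝ≥0∞)}) ∪ A ∩ {ω | ¬σ ω < ∞} := by
    ext ω
    rcases eq_or_ne (σ ω) ∞ with h | h
    · simp [h]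
    · obtain ⟨N, hN⟩ := ENNReal.exists_nat_gt h
      simpa [h] using fun _ => ⟨N, hN.le⟩
  rw [hcover]
  exact (MeasurableSet.iUnion fun N : ℕ => hle _ _ (hσ.measurableSet_inter_le hA N)).union
    (hle _ _ (hnull _ (measure_mono_null inter_subset_right hfin)))

end IsStoppingTimeE

lemma le_sigmaAt (hmono : Monotone 𝔉) (hσ : IsStoppingTimeE 𝔉 σ) {t : ℝ≥0} (ht : ∀ ω, t ≤ σ ω) :
    𝔉 t ≤ sigmaAt 𝔉 σ := by
  refine fun A hA => measurableSet_sigmaAt_of_forall fun s => ?_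
  by_cases hts : t ≤ s
  · exact (hmono hts _ hA).inter (hσ s)
  · have : A ∩ {ω | σ ω ≤ s} = ∅ := eq_empty_of_forall_notMem fun ω hω =>
      hts (ENNReal.coe_le_coe.1 ((ht ω).trans hω.2))
    rw [this]
    exact @MeasurableSet.empty _ (𝔉 s)

end StoppingTime

section HittingTime

variable {X : ℝ≥0 → Ω → ℝ} {B : Set ℝ} {τ τ' : Ω → ℝ≥0∞} {ω : Ω}

lemma hitAfterE_congr (h : τ ω = τ' ω) : hitAfterE X B τ ω = hitAfterE X B τ' ω := by
  simp only [hitAfterE, h]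

lemma hitAfterE_lt_iff {c : ℝ≥0∞} :
    hitAfterE X B τ ω < c ↔ ∃ u : ℝ≥0, τ ω < u ∧ X u ω ∈ B ∧ (u : ℝ≥0∞) < c := by
  simp only [hitAfterE, iInf_lt_iff, mem_ofPred_eq, exists_prop, and_assoc]

lemma le_hitAfterE : τ ω ≤ hitAfterE X B τ ω :=
  le_iInf₂ fun _ hu => hu.1.le

lemma hitAfterE_mono (h : τ ω ≤ τ' ω) : hitAfterE X B τ ω ≤ hitAfterE X B τ' ω :=
  le_iInf₂ fun _ hu => iInf₂_le _ ⟨h.trans_lt hu.1, hu.2⟩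

lemma tendsto_hitAfterE {d : ℕ → Ω → ℝ≥0∞} (hle : ∀ k, τ ω ≤ d k ω)
    (h : Tendsto (fun k => d k ω) atTop (𝓝 (τ ω))) :
    Tendsto (fun k => hitAfterE X B (d k) ω) atTop (𝓝 (hitAfterE X B τ ω)) := by
  refine tendsto_order.2 ⟨fun a ha => Eventually.of_forall fun k =>
    ha.trans_le (hitAfterE_mono (hle k)), fun c hc => ?_⟩
  obtain ⟨u, hτu, hXu, huc⟩ := hitAfterE_lt_iff.1 hc
  filter_upwards [h.eventually (gt_mem_nhds hτu)] with k hk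
  exact hitAfterE_lt_iff.2 ⟨u, hk, hXu, huc⟩

protected lemma IsStoppingTimeE.hitAfterE {𝔉 : ℝ≥0 → MeasurableSpace Ω} (hmono : Monotone 𝔉)
    (hrc : RightContinuousFilt 𝔉)
    (hhit : ∀ s : ℝ≥0, IsStoppingTimeE 𝔉 (hitAfterE X B fun _ => (s : ℝ≥0∞)))
    (hτ : IsStoppingTimeE 𝔉 τ) : IsStoppingTimeE 𝔉 (hitAfterE X B τ) := by
  refine isStoppingTimeE_of_measurableSet_lt hmono hrc fun t => ?_
  obtain ⟨D, hDc, hD⟩ := TopologicalSpace.exists_countable_dense ℝ≥0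
  have hcover : {ω | hitAfterE X B τ ω < t} = ⋃ q ∈ D ∩ Iic t,
      {ω | τ ω ≤ q} ∩ {ω | hitAfterE X B (fun _ => (q : ℝ≥0∞)) ω < t} := by
    ext ω
    simp only [mem_ofPred_eq, mem_iUnion, mem_inter_iff, mem_Iic, exists_prop]
    constructor
    · intro h
      obtain ⟨u, hτu, hXu, hut⟩ := hitAfterE_lt_iff.1 h
      lift τ ω to ℝ≥0 using hτu.ne_top with r
      obtain ⟨q, hq, hrq, hqu⟩ := hD.exists_between (ENNReal.coe_lt_coe.1 hτu)
      exact ⟨q, ⟨hq, (hqu.trans (ENNReal.coe_lt_coe.1 hut)).le⟩, ENNReal.coe_le_coe.2 hrq.le,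
        hitAfterE_lt_iff.2 ⟨u, ENNReal.coe_lt_coe.2 hqu, hXu, hut⟩⟩
    · rintro ⟨q, -, hτq, hqt⟩
      exact (hitAfterE_mono hτq).trans_lt hqt
  rw [hcover]
  exact MeasurableSet.biUnion (hDc.mono inter_subset_left) fun q hq =>
    (hmono hq.2 _ (hτ q)).inter ((hhit q).measurableSet_lt hmono t)

end HittingTime

section DyadicApproximation

/-- The dyadic approximation of `x` from above at scale `2 ^ (-k)`, with `∞ ↦ ∞`. Adding one to the
floor keeps it strictly above a finite `x`. -/
def dyadicAbove (k : ℕ) (x : ℝ≥0∞) : ℝ≥0∞ :=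
  if x = ∞ then ∞ else ((⌊2 ^ k * x.toNNReal⌋₊ + 1) / 2 ^ k : ℝ≥0)

lemma le_dyadicAbove (k : ℕ) (x : ℝ≥0∞) : x ≤ dyadicAbove k x := by
  induction x with
  | top => simp [dyadicAbove]
  | coe r =>
    simp only [dyadicAbove, ENNReal.coe_ne_top, if_false, ENNReal.toNNReal_coe, ENNReal.coe_le_coe]
    rw [le_div_iff₀ (by positivity), mul_comm]
    exact (Nat.lt_floor_add_one _).le

lemma measurable_dyadicAbove (k : ℕ) : Measurable (dyadicAbove k) := by
  refine Measurable.ite (measurableSet_singleton _) measurable_const ?_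
  fun_prop

lemma countable_range_dyadicAbove (k : ℕ) : (range (dyadicAbove k)).Countable := by
  refine ((countable_range fun n : ℕ => (((n + 1) / 2 ^ k : ℝ≥0) : ℝ≥0∞)).insert ∞).mono ?_
  rintro _ ⟨x, rfl⟩
  by_cases hx : x = ∞
  · simp [dyadicAbove, hx]
  · exact Or.inr ⟨⌊2 ^ k * x.toNNReal⌋₊, by simp [dyadicAbove, hx]⟩

lemma tendsto_dyadicAbove (x : ℝ≥0∞) : Tendsto (fun k => dyadicAbove k x) atTop (𝓝 x) := by
  induction x with
  | top => simp [dyadicAbove]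
  | coe r =>
    simp only [dyadicAbove, ENNReal.coe_ne_top, if_false, ENNReal.toNNReal_coe,
      ENNReal.tendsto_coe]
    have hpow : Tendsto (fun k : ℕ => (2⁻¹ : ℝ≥0) ^ k) atTop (𝓝 0) :=
      NNReal.tendsto_pow_atTop_nhds_zero_of_lt_one (by norm_num)
    refine tendsto_of_tendsto_of_tendsto_of_le_of_le tendsto_const_nhds
      (by simpa using hpow.const_add r) (fun k => ?_) fun k => ?_
    · exact ENNReal.coe_le_coe.1 (by simpa [dyadicAbove] using le_dyadicAbove k r)
    · rw [div_le_iff₀ (by positivity), add_mul, mul_comm r,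
        inv_mul_cancel₀ (by positivity)]
      gcongr
      exact Nat.floor_le (zero_le)

lemma countable_range_dyadicAbove_comp (k : ℕ) (τ : Ω → ℝ≥0∞) :
    (range fun ω => dyadicAbove k (τ ω)).Countable :=
  (countable_range_dyadicAbove k).mono (range_comp_subset_range τ (dyadicAbove k))

protected lemma IsStoppingTimeE.dyadicAbove {𝔉 : ℝ≥0 → MeasurableSpace Ω} (hmono : Monotone 𝔉)
    {τ : Ω → ℝ≥0∞} (hτ : IsStoppingTimeE 𝔉 τ) (k : ℕ) :
    IsStoppingTimeE 𝔉 fun ω => dyadicAbove k (τ ω) :=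
  hτ.comp hmono (measurable_dyadicAbove k) (le_dyadicAbove k)

end DyadicApproximation

section RightContinuous

variable {β : Type*} [TopologicalSpace β] {φ : ℝ≥0 → β} {D : Set ℝ≥0}

lemma mem_of_isClosed_of_forall_dense (hφ : ∀ t, ContinuousWithinAt φ (Ici t) t) (hD : Dense D)
    {C : Set β} (hC : IsClosed C) {a : ℝ≥0} (h : ∀ q ∈ D, a ≤ q → φ q ∈ C) {t : ℝ≥0}
    (hat : a ≤ t) : φ t ∈ C := by
  obtain ⟨u, -, hu, hlim⟩ := hD.exists_seq_strictAnti_tendsto t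
  have hIci : Tendsto u atTop (𝓝[≥] t) :=
    tendsto_nhdsWithin_iff.2 ⟨hlim, Eventually.of_forall fun n => mem_Ici.2 (hu n).1.le⟩
  exact hC.mem_of_tendsto ((hφ t).tendsto.comp hIci)
    (Eventually.of_forall fun n => h _ (hu n).2 (hat.trans (hu n).1.le))

lemma tendsto_atTop_of_dense [RegularSpace β] (hφ : ∀ t, ContinuousWithinAt φ (Ici t) t)
    (hD : Dense D) {l : β} (h : Tendsto (fun q : D => φ q) atTop (𝓝 l)) :
    Tendsto φ atTop (𝓝 l) := by
  have : Nonempty D := hD.nonempty.to_subtype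
  refine (closed_nhds_basis l).tendsto_right_iff.2 fun C hC => ?_
  obtain ⟨q₀, hq₀⟩ := eventually_atTop.1 (h hC.1)
  filter_upwards [eventually_ge_atTop (q₀ : ℝ≥0)] with t ht
  exact mem_of_isClosed_of_forall_dense hφ hD hC.2 (fun q hq hle => hq₀ ⟨q, hq⟩ hle) ht

end RightContinuous

lemma limsup_add_of_tendsto {ι : Type*} {f : Filter ι} [f.NeBot] {u v : ι → ℝ} {a : ℝ}
    (hle : IsBoundedUnder (· ≤ ·) f u) (hge : IsBoundedUnder (· ≥ ·) f u)
    (hv : Tendsto v f (𝓝 a)) : limsup (u + v) f = limsup u f + a := by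
  refine le_antisymm ?_ ?_
  · simpa only [hv.limsup_eq] using
      limsup_add_le hge hle hv.isCoboundedUnder_le hv.isBoundedUnder_le
  · simpa only [hv.liminf_eq] using
      le_limsup_add hle hge.isCoboundedUnder_le hv.isBoundedUnder_le hv.isBoundedUnder_ge

section Evaluation

variable {V : ℝ≥0 → Ω → ℝ} {σ τ ρ : Ω → ℝ≥0∞} {ω : Ω}

lemma evalAt_congr (h : σ ω = τ ω) : evalAt V σ ω = evalAt V τ ω := by
  simp only [evalAt, h]

lemma evalAt_coe (t : ℝ≥0) : evalAt V (fun _ => (t : ℝ≥0∞)) = V t := by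
  ext ω
  simp [evalAt]

lemma tendsto_evalAt (hV : ∀ t, ContinuousWithinAt (fun s => V s ω) (Ici t) t)
    {d : ℕ → Ω → ℝ≥0∞} (hle : ∀ k, τ ω ≤ d k ω)
    (h : Tendsto (fun k => d k ω) atTop (𝓝 (τ ω))) :
    Tendsto (fun k => evalAt V (d k) ω) atTop (𝓝 (evalAt V τ ω)) := by
  by_cases hτ : τ ω = ∞
  · have hd : ∀ k, d k ω = τ ω := fun k => le_antisymm (hτ ▸ le_top) (hle k)
    simp only [evalAt_congr (hd _), tendsto_const_nhds]
  · have hIci : Tendsto (fun k => (d k ω).toNNReal) atTop (𝓝[≥] (τ ω).toNNReal) := by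
      refine tendsto_nhdsWithin_iff.2 ⟨(ENNReal.tendsto_toNNReal hτ).comp h, ?_⟩
      filter_upwards [h.eventually_ne hτ] with k hk
      exact ENNReal.toNNReal_mono hk (hle k)
    have hlim : Tendsto (fun k => V (d k ω).toNNReal ω) atTop (𝓝 (evalAt V τ ω)) := by
      have heval : evalAt V τ ω = V (τ ω).toNNReal ω := by simp [evalAt, hτ]
      rw [heval]
      exact (hV _).tendsto.comp hIci
    refine hlim.congr' ?_
    filter_upwards [h.eventually_ne hτ] with k hk
    simp [evalAt, hk]

lemma measurable_evalAt (hV : ∀ ω t, ContinuousWithinAt (fun s => V s ω) (Ici t) t)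
    (hVm : ∀ c : ℝ≥0∞, Measurable (evalAt V fun _ => c)) (hτ : Measurable τ) :
    Measurable (evalAt V τ) := by
  refine measurable_of_tendsto_metrizable (f := fun k => evalAt V fun ω => dyadicAbove k (τ ω))
    (fun k => ?_) (tendsto_pi_nhds.2 fun ω => tendsto_evalAt (hV ω)
      (fun k => le_dyadicAbove k _) (tendsto_dyadicAbove _))
  have : Countable (range (dyadicAbove k)) := countable_range_dyadicAbove k
  have hind : Measurable fun ω => rangeFactorization (dyadicAbove k) (τ ω) :=
    ((measurable_dyadicAbove k).comp hτ).subtype_mk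
  exact (measurable_from_prod_countable_right (f := fun p : range (dyadicAbove k) × Ω =>
    evalAt V (fun _ => p.1.1) p.2) fun c => hVm c.1).comp (hind.prodMk measurable_id)

end Evaluation

section Localization

variable {μ : Measure Ω} [IsFiniteMeasure μ] {𝔉 : ℝ≥0 → MeasurableSpace Ω} {σ τ ρ : Ω → ℝ≥0∞}

lemma sigmaAt_const (hmono : Monotone 𝔉) (t : ℝ≥0) : sigmaAt 𝔉 (fun _ => (t : ℝ≥0∞)) = 𝔉 t := by
  refine le_antisymm (fun A hA => ?_) (le_sigmaAt hmono (isStoppingTimeE_const _) fun _ => le_rfl)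
  simpa using (isStoppingTimeE_const (t : ℝ≥0∞)).measurableSet_inter_le hA t

lemma IsStoppingTimeE.measurableSet_sigmaAt_of_eqOn (hσ : IsStoppingTimeE 𝔉 σ) {A : Set Ω}
    (h : EqOn σ τ A) (hA : MeasurableSet[sigmaAt 𝔉 σ] A) : MeasurableSet[sigmaAt 𝔉 τ] A := by
  refine measurableSet_sigmaAt_of_forall fun t => ?_
  have : A ∩ {ω | τ ω ≤ t} = A ∩ {ω | σ ω ≤ t} := by
    ext ω; simpa using fun hω => by rw [h hω]
  rw [this]
  exact hσ.measurableSet_inter_le hA t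

lemma condExp_sigmaAt_ae_eq_on (hσ : IsStoppingTimeE 𝔉 σ) (hτ : IsStoppingTimeE 𝔉 τ) {A : Set Ω}
    (hA : MeasurableSet[sigmaAt 𝔉 σ ⊓ m0] A) (hστ : EqOn σ τ A) {f g : Ω → ℝ}
    (hf : Integrable f μ) (hg : Integrable g μ) (hfg : EqOn f g A) : ∀ᵐ ω ∂μ, ω ∈ A →
      (μ[f | sigmaAt 𝔉 σ ⊓ m0]) ω = (μ[g | sigmaAt 𝔉 τ ⊓ m0]) ω := by
  have hA0 : MeasurableSet[m0] A := inf_le_right (a := sigmaAt 𝔉 σ) A hA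
  have hspace : ∀ t, MeasurableSet[sigmaAt 𝔉 σ ⊓ m0] (A ∩ t) ↔
      MeasurableSet[sigmaAt 𝔉 τ ⊓ m0] (A ∩ t) := fun t => and_congr_left fun _ =>
    ⟨hσ.measurableSet_sigmaAt_of_eqOn (hστ.mono inter_subset_left),
      hτ.measurableSet_sigmaAt_of_eqOn (hστ.symm.mono inter_subset_left)⟩
  have hg_eq := condExp_ae_eq_restrict_of_measurableSpace_eq_on (μ := μ) (f := g)
    (inf_le_right (a := sigmaAt 𝔉 σ)) (inf_le_right (a := sigmaAt 𝔉 τ)) hA hspace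
  filter_upwards [condExp_ae_eq_on hf hg hA hA0 hfg, (ae_restrict_iff' hA0).1 hg_eq]
    with ω hω hω' hmem
  exact (hω hmem).trans (hω' hmem)

end Localization

section RightContinuousProcess

variable {μ : Measure Ω} [IsFiniteMeasure μ] {𝔉 : ℝ≥0 → MeasurableSpace Ω}

/- On a countable dense set of times `V` is squeezed between closed martingales; right-continuity
carries the limit over to all times. -/
lemma ae_tendsto_of_condExp_le_of_le_condExp (hmono : Monotone 𝔉) (hle : ∀ t, 𝔉 t ≤ m0)
    {V : ℝ≥0 → Ω → ℝ} (hV : ∀ ω t, ContinuousWithinAt (fun s => V s ω) (Ici t) t)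
    {ξ : ℕ → Ω → ℝ} {η : Ω → ℝ} (hξ : ∀ N, Integrable (ξ N) μ)
    (hξm : ∀ N, Measurable[⨆ t, 𝔉 t] (ξ N)) (hη : Integrable η μ) (hηm : Measurable[⨆ t, 𝔉 t] η)
    (hlim : ∀ᵐ ω ∂μ, Tendsto (fun N => ξ N ω) atTop (𝓝 (η ω)))
    (hηV : ∀ t, μ[η | 𝔉 t] ≤ᵐ[μ] V t) (hVξ : ∀ (N : ℕ) t, (N : ℝ≥0) ≤ t → V t ≤ᵐ[μ] μ[ξ N | 𝔉 t]) :
    ∀ᵐ ω ∂μ, Tendsto (fun t => V t ω) atTop (𝓝 (η ω)) := by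
  obtain ⟨D, hDc, hD⟩ := TopologicalSpace.exists_countable_dense ℝ≥0
  have : Countable D := hDc
  have : Nonempty D := hD.nonempty.to_subtype
  let ℱ : Filtration D m0 := ⟨fun q => 𝔉 q, fun _ _ h => hmono h, fun q => hle q⟩
  have hsup : ⨆ t, 𝔉 t = ⨆ q, ℱ q := le_antisymm
    (iSup_le fun t => by
      obtain ⟨q, hq, htq⟩ := hD.exists_gt t
      exact (hmono htq.le).trans (le_iSup ℱ ⟨q, hq⟩))
    (iSup_le fun q => le_iSup 𝔉 q)
  rw [hsup] at hξm hηm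
  filter_upwards [hlim, ae_tendsto_condExp hη hηm.stronglyMeasurable,
    ae_all_iff.2 fun N => ae_tendsto_condExp (hξ N) (hξm N).stronglyMeasurable,
    ae_all_iff.2 fun q : D => hηV q,
    ae_all_iff.2 fun N : ℕ => ae_all_iff.2 fun q : {q : D // (N : ℝ≥0) ≤ q} => hVξ N q q.2]
    with ω hξη hηD hξD hlow hup
  refine tendsto_atTop_of_dense (hV ω) hD (tendsto_order.2 ⟨fun a ha => ?_, fun b hb => ?_⟩)
  · filter_upwards [hηD.eventually_const_lt ha] with q hq
    exact hq.trans_le (hlow q)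
  · obtain ⟨N, hN⟩ := (hξη.eventually_lt_const hb).exists
    obtain ⟨q₀, hq₀, hNq₀⟩ := hD.exists_gt (N : ℝ≥0)
    filter_upwards [(hξD N).eventually_lt_const hN, eventually_ge_atTop ⟨q₀, hq₀⟩] with q hq hge
    exact (hup N ⟨q, hNq₀.le.trans hge⟩).trans_lt hq

end RightContinuousProcess

section Reward

/-- The usual conditions on a filtration `𝔉`: right-continuity, and every null set (hence every set
of outer measure zero) belongs to `𝔉 0`. -/
structure UsualConditions (μ : Measure Ω) (𝔉 : ℝ≥0 → MeasurableSpace Ω) : Prop where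
  le : ∀ t, 𝔉 t ≤ m0
  mono : Monotone 𝔉
  rightCont : RightContinuousFilt 𝔉
  measurableSet_of_null : ∀ A, μ A = 0 → MeasurableSet[𝔉 0] A

/-- A reward process: adapted, nonnegative, right-continuous, with integrable supremum. -/
structure IsRewardProcess (μ : Measure Ω) (𝔉 : ℝ≥0 → MeasurableSpace Ω) (Y : ℝ≥0 → Ω → ℝ) :
    Prop where
  adapted : ∀ t, Measurable[𝔉 t] (Y t)
  nonneg : ∀ t ω, 0 ≤ Y t ω
  rightCont : ∀ ω t, ContinuousWithinAt (fun s => Y s ω) (Ici t) t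
  lintegral_iSup_lt_top : ∫⁻ ω, ⨆ t : ℝ≥0, ENNReal.ofReal (Y t ω) ∂μ < ∞

/-- The supremum of `Y` over `[a, ∞)`, dominating the rewards of all exercises from time `a` on. It
is `[0, ∞]`-valued, so negative values of `Y` count as `0`. -/
def tailSup (Y : ℝ≥0 → Ω → ℝ) (a : ℝ≥0) (ω : Ω) : ℝ≥0∞ :=
  ⨆ t ∈ Ici a, ENNReal.ofReal (Y t ω)

variable {μ : Measure Ω} {𝔉 : ℝ≥0 → MeasurableSpace Ω} {Y : ℝ≥0 → Ω → ℝ} {τ : Ω → ℝ≥0∞}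
  {S : ℕ → Ω → ℝ≥0∞} {m : ℕ} {a : ℝ≥0} {ω : Ω}

lemma tailSup_antitone : Antitone fun a => tailSup Y a ω :=
  fun _ _ h => biSup_mono fun _ ht => h.trans ht

lemma tailSup_zero : tailSup Y 0 ω = ⨆ t, ENNReal.ofReal (Y t ω) := by
  simp [tailSup]

lemma tailSup_ne_top (h : tailSup Y 0 ω ≠ ∞) : tailSup Y a ω ≠ ∞ :=
  ne_top_of_le_ne_top h (tailSup_antitone zero_le)

lemma rewardSum_congr {S' : ℕ → Ω → ℝ≥0∞} (h : ∀ i < m, S i ω = S' i ω) :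
    rewardSum Y m S ω = rewardSum Y m S' ω :=
  Finset.sum_congr rfl fun i hi => evalAt_congr (h i (Finset.mem_range.1 hi))

lemma rewardSum_succ :
    rewardSum Y (m + 1) S = evalAt Y (S 0) + rewardSum Y m fun i => S (i + 1) := by
  ext ω
  simp only [rewardSum, Finset.sum_range_succ', Pi.add_apply, add_comm]

lemma rewardSum_const : rewardSum Y m (fun _ => τ) = fun ω => m * evalAt Y τ ω := by
  ext ω
  simp [rewardSum]

namespace IsRewardProcess

lemma le_tailSup (hY : IsRewardProcess μ 𝔉 Y) (h : tailSup Y 0 ω ≠ ∞) {t : ℝ≥0} (hat : a ≤ t) :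
    Y t ω ≤ (tailSup Y a ω).toReal := by
  rw [← ENNReal.toReal_ofReal (hY.nonneg t ω)]
  exact ENNReal.toReal_mono (tailSup_ne_top h)
    (le_biSup (fun t => ENNReal.ofReal (Y t ω)) (mem_Ici.2 hat))

lemma tendsto_tailSup (hY : IsRewardProcess μ 𝔉 Y) (h : tailSup Y 0 ω ≠ ∞) :
    Tendsto (fun N : ℕ => (tailSup Y N ω).toReal) atTop (𝓝 (evalAt Y (fun _ => ∞) ω)) := by
  have hlimsup : evalAt Y (fun _ => ∞) ω = (⨅ a, tailSup Y a ω).toReal := by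
    have hbdd : ∀ᶠ t in atTop, ENNReal.ofReal (Y t ω) ≤ tailSup Y 0 ω :=
      Eventually.of_forall fun t => (le_iSup (fun t => ENNReal.ofReal (Y t ω)) t).trans_eq
        tailSup_zero.symm
    calc evalAt Y (fun _ => ∞) ω = limsup (fun t => (ENNReal.ofReal (Y t ω)).toReal) atTop := by
          simp [evalAt, ENNReal.toReal_ofReal (hY.nonneg _ ω)]
      _ = (limsup (fun t => ENNReal.ofReal (Y t ω)) atTop).toReal :=
          ENNReal.limsup_toReal_eq h hbdd
      _ = (⨅ a, tailSup Y a ω).toReal := by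
          simp only [atTop_basis.limsup_eq_iInf_iSup, iInf_true, tailSup]
  rw [hlimsup]
  refine (ENNReal.tendsto_toReal (ne_top_of_le_ne_top h (iInf_le _ 0))).comp
    ((tendsto_atTop_iInf tailSup_antitone).comp tendsto_natCast_atTop_atTop)

lemma evalAt_le_tailSup (hY : IsRewardProcess μ 𝔉 Y) (h : tailSup Y 0 ω ≠ ∞) (hat : a ≤ τ ω) :
    evalAt Y τ ω ≤ (tailSup Y a ω).toReal := by
  by_cases hτ : τ ω = ∞
  · rw [evalAt_congr (τ := fun _ => ∞) hτ]
    refine le_of_tendsto (hY.tendsto_tailSup h) ?_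
    filter_upwards [tendsto_natCast_atTop_atTop.eventually_ge_atTop a] with N hN
    exact ENNReal.toReal_mono (tailSup_ne_top h) (tailSup_antitone hN)
  · have heval : evalAt Y τ ω = Y (τ ω).toNNReal ω := by simp [evalAt, hτ]
    rw [heval]
    exact hY.le_tailSup h (ENNReal.coe_le_coe.1 (hat.trans_eq (ENNReal.coe_toNNReal hτ).symm))

lemma evalAt_nonneg (hY : IsRewardProcess μ 𝔉 Y) : 0 ≤ evalAt Y τ ω := by
  unfold evalAt
  split_ifs
  · exact hY.nonneg _ ω
  · refine Real.sInf_nonneg fun b hb => ?_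
    obtain ⟨t, ht⟩ := (eventually_map.1 hb).exists
    exact (hY.nonneg t ω).trans ht

lemma rewardSum_nonneg (hY : IsRewardProcess μ 𝔉 Y) : 0 ≤ rewardSum Y m S ω :=
  Finset.sum_nonneg fun _ _ => hY.evalAt_nonneg

lemma rewardSum_le_tailSup (hY : IsRewardProcess μ 𝔉 Y) (h : tailSup Y 0 ω ≠ ∞)
    (hS : ∀ i < m, a ≤ S i ω) : rewardSum Y m S ω ≤ m * (tailSup Y a ω).toReal := by
  calc rewardSum Y m S ω ≤ ∑ _i ∈ Finset.range m, (tailSup Y a ω).toReal :=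
        Finset.sum_le_sum fun i hi => hY.evalAt_le_tailSup h (hS i (Finset.mem_range.1 hi))
    _ = m * (tailSup Y a ω).toReal := by simp

lemma tendsto_rewardSum (hY : IsRewardProcess μ 𝔉 Y) {d : ℕ → ℕ → Ω → ℝ≥0∞}
    (hle : ∀ i < m, ∀ k, S i ω ≤ d k i ω)
    (h : ∀ i < m, Tendsto (fun k => d k i ω) atTop (𝓝 (S i ω))) :
    Tendsto (fun k => rewardSum Y m (d k) ω) atTop (𝓝 (rewardSum Y m S ω)) :=
  tendsto_finsetSum _ fun i hi => tendsto_evalAt (hY.rightCont ω) (hle i (Finset.mem_range.1 hi))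
    (h i (Finset.mem_range.1 hi))

lemma measurable_tailSup (hY : IsRewardProcess μ 𝔉 Y) (a : ℝ≥0) :
    Measurable[⨆ t, 𝔉 t] (tailSup Y a) := by
  obtain ⟨D, hDc, hD⟩ := TopologicalSpace.exists_countable_dense ℝ≥0
  have hdense : tailSup Y a = fun ω => ⨆ t ∈ D ∩ Ici a, ENNReal.ofReal (Y t ω) := by
    ext ω
    refine le_antisymm (iSup₂_le fun t ht => ?_) (biSup_mono fun t ht => ht.2)
    refine mem_of_isClosed_of_forall_dense (φ := fun s => ENNReal.ofReal (Y s ω))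
      (fun t => (ENNReal.continuous_ofReal.tendsto _).comp (hY.rightCont ω t)) hD isClosed_Iic
      (fun q hq haq => ?_) ht
    exact le_biSup (fun t => ENNReal.ofReal (Y t ω)) (show q ∈ D ∩ Ici a from ⟨hq, haq⟩)
  rw [hdense]
  exact Measurable.biSup _ (hDc.mono inter_subset_left) fun t _ =>
    ((hY.adapted t).mono (le_iSup 𝔉 t) le_rfl).ennreal_ofReal

lemma ae_tailSup_ne_top (hY : IsRewardProcess μ 𝔉 Y) (h𝔉 : UsualConditions μ 𝔉) :
    ∀ᵐ ω ∂μ, tailSup Y 0 ω ≠ ∞ := by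
  refine (ae_lt_top ((hY.measurable_tailSup 0).mono (iSup_le h𝔉.le) le_rfl) ?_).mono
    fun _ h => h.ne
  simpa only [tailSup_zero] using hY.lintegral_iSup_lt_top.ne

lemma integrable_tailSup (hY : IsRewardProcess μ 𝔉 Y) (h𝔉 : UsualConditions μ 𝔉)
    (a : ℝ≥0) : Integrable (fun ω => (tailSup Y a ω).toReal) μ := by
  refine integrable_toReal_of_lintegral_ne_top
    ((hY.measurable_tailSup a).mono (iSup_le h𝔉.le) le_rfl).aemeasurable
    (ne_top_of_le_ne_top hY.lintegral_iSup_lt_top.ne (lintegral_mono fun ω => ?_))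
  exact tailSup_zero (Y := Y) ▸ tailSup_antitone zero_le

lemma measurable_evalAt_top (hY : IsRewardProcess μ 𝔉 Y) (h𝔉 : UsualConditions μ 𝔉) :
    Measurable[⨆ t, 𝔉 t] (evalAt Y fun _ => ∞) := by
  have hlimsup : evalAt Y (fun _ => ∞) =ᵐ[μ]
      fun ω => limsup (fun N : ℕ => (tailSup Y N ω).toReal) atTop :=
    (hY.ae_tailSup_ne_top h𝔉).mono fun ω h => (hY.tendsto_tailSup h).limsup_eq.symm
  exact measurable_of_ae_eq
    (fun A hA => le_iSup 𝔉 0 A (h𝔉.measurableSet_of_null A hA)) hlimsup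
    (Measurable.limsup fun N => (hY.measurable_tailSup N).ennreal_toReal)

protected lemma measurable_evalAt (hY : IsRewardProcess μ 𝔉 Y) (h𝔉 : UsualConditions μ 𝔉)
    (hτ : Measurable τ) : Measurable (evalAt Y τ) := by
  refine measurable_evalAt hY.rightCont (fun c => ?_) hτ
  induction c with
  | top => exact (hY.measurable_evalAt_top h𝔉).mono (iSup_le h𝔉.le) le_rfl
  | coe t => simpa only [evalAt_coe] using (hY.adapted t).mono (h𝔉.le t) le_rfl

lemma integrable_rewardSum (hY : IsRewardProcess μ 𝔉 Y) (h𝔉 : UsualConditions μ 𝔉)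
    (hS : ∀ i < m, IsStoppingTimeE 𝔉 (S i)) : Integrable (rewardSum Y m S) μ := by
  refine integrable_finsetSum _ fun i hi => ?_
  refine (hY.integrable_tailSup h𝔉 0).mono' (hY.measurable_evalAt h𝔉
    ((hS i (Finset.mem_range.1 hi)).measurable_of_le h𝔉.le)).aestronglyMeasurable ?_
  filter_upwards [hY.ae_tailSup_ne_top h𝔉] with ω h
  rw [Real.norm_of_nonneg hY.evalAt_nonneg]
  exact hY.evalAt_le_tailSup h zero_le

lemma condExp_rewardSum_le (hY : IsRewardProcess μ 𝔉 Y) (h𝔉 : UsualConditions μ 𝔉)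
    (hS : ∀ i < m, IsStoppingTimeE 𝔉 (S i)) (ha : ∀ i < m, ∀ ω, a ≤ S i ω)
    (𝒢 : MeasurableSpace Ω) :
    μ[rewardSum Y m S | 𝒢] ≤ᵐ[μ] μ[fun ω => m * (tailSup Y a ω).toReal | 𝒢] :=
  condExp_mono (hY.integrable_rewardSum h𝔉 hS) ((hY.integrable_tailSup h𝔉 a).const_mul _) <|
    (hY.ae_tailSup_ne_top h𝔉).mono fun ω h => hY.rewardSum_le_tailSup h fun i hi => ha i hi ω

lemma tendsto_eLpNorm_rewardSum (hY : IsRewardProcess μ 𝔉 Y) (h𝔉 : UsualConditions μ 𝔉)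
    {d : ℕ → ℕ → Ω → ℝ≥0∞}
    (hd : ∀ k, ∀ i < m, IsStoppingTimeE 𝔉 (d k i)) (hle : ∀ i < m, ∀ k ω, S i ω ≤ d k i ω)
    (h : ∀ i < m, ∀ ω, Tendsto (fun k => d k i ω) atTop (𝓝 (S i ω))) :
    Tendsto (fun k => eLpNorm (rewardSum Y m (d k) - rewardSum Y m S) 1 μ) atTop (𝓝 0) := by
  simp only [eLpNorm_one_eq_lintegral_enorm, ← ofReal_norm]
  refine tendsto_lintegral_norm_of_dominated_convergence
    (fun k => (hY.integrable_rewardSum h𝔉 (hd k)).1)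
    ((hY.integrable_tailSup h𝔉 0).const_mul m).2 (fun k => ?_)
    (Eventually.of_forall fun ω => hY.tendsto_rewardSum (fun i hi k => hle i hi k ω)
      fun i hi => h i hi ω)
  filter_upwards [hY.ae_tailSup_ne_top h𝔉] with ω hω
  rw [Real.norm_of_nonneg hY.rewardSum_nonneg]
  exact hY.rewardSum_le_tailSup hω fun _ _ => zero_le

end IsRewardProcess

end Reward

section Strategy

variable {𝔉 : ℝ≥0 → MeasurableSpace Ω} {X : ℝ≥0 → Ω → ℝ} {B : ℕ → Set ℝ} {n m : ℕ}
  {σ ρ : Ω → ℝ≥0∞} {S : ℕ → Ω → ℝ≥0∞} {ω : Ω}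

/-- The strategy `S` delayed until the random time `d`: the first exercise takes place at `d`, and
each later one is postponed only as far as the waiting rule requires. -/
def delay (X : ℝ≥0 → Ω → ℝ) (B : ℕ → Set ℝ) (S : ℕ → Ω → ℝ≥0∞) (d : Ω → ℝ≥0∞) : ℕ → Ω → ℝ≥0∞
  | 0 => d
  | i + 1 => fun ω => max (S (i + 1) ω) (hitAfterE X (B i) (delay X B S d i) ω)

lemma le_delay (h : S 0 ω ≤ ρ ω) : ∀ i, S i ω ≤ delay X B S ρ i ω
  | 0 => h
  | _ + 1 => le_max_left _ _

lemma isStrategyB_top : IsStrategyB 𝔉 X B n σ fun _ _ => ∞ :=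
  ⟨fun _ _ => isStoppingTimeE_const _, fun _ => le_top, fun _ _ _ => le_top⟩

namespace IsStrategyB

lemma start_le (hS : IsStrategyB 𝔉 X B n σ S) : ∀ i < n, σ ω ≤ S i ω
  | 0, _ => hS.2.1 ω
  | i + 1, hi => (hS.start_le i (by omega)).trans (le_hitAfterE.trans (hS.2.2 i hi ω))

lemma mono (hS : IsStrategyB 𝔉 X B n σ S) (h : ρ ≤ σ) : IsStrategyB 𝔉 X B n ρ S :=
  ⟨hS.1, fun ω => (h ω).trans (hS.2.1 ω), hS.2.2⟩

lemma tail (hS : IsStrategyB 𝔉 X B (m + 1) σ S) (hm : 0 < m) :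
    IsStrategyB 𝔉 X (fun i => B (i + 1)) m (hitAfterE X (B 0) (S 0)) fun i => S (i + 1) :=
  ⟨fun i hi => hS.1 _ (by omega), hS.2.2 0 (by omega), fun i hi => hS.2.2 (i + 1) (by omega)⟩

lemma exists_cons (hS : IsStrategyB 𝔉 X (fun i => B (i + 1)) m (hitAfterE X (B 0) ρ) S)
    (hρ : IsStoppingTimeE 𝔉 ρ) : ∃ T, IsStrategyB 𝔉 X B (m + 1) ρ T ∧ T 0 = ρ ∧
      (fun i => T (i + 1)) = S := by
  refine ⟨fun i => Nat.casesOn i ρ S, ⟨fun i hi => ?_, fun _ => le_rfl, fun i hi => ?_⟩, rfl, rfl⟩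
  · cases i with
    | zero => exact hρ
    | succ i => exact hS.1 i (by omega)
  · cases i with
    | zero => exact hS.2.1
    | succ i => exact hS.2.2 i (by omega)

lemma glue {ι : Type*} [Countable ι] {J : Ω → ι} {σ : ι → Ω → ℝ≥0∞} {T : ι → ℕ → Ω → ℝ≥0∞}
    (hσ : ∀ j, IsStoppingTimeE 𝔉 (σ j)) (hT : ∀ j, IsStrategyB 𝔉 X B n (σ j) (T j))
    (hJ : ∀ j, MeasurableSet[sigmaAt 𝔉 (σ j)] (J ⁻¹' {j})) :
    IsStrategyB 𝔉 X B n (fun ω => σ (J ω) ω) fun i ω => T (J ω) i ω := by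
  refine ⟨fun i hi => IsStoppingTimeE.glue (fun j => (hT j).1 i hi) fun j =>
    (hσ j).sigmaAt_mono ((hT j).1 i hi) (fun _ => (hT j).start_le i hi) _ (hJ j),
    fun ω => (hT (J ω)).2.1 ω, fun i hi ω => ?_⟩
  exact (hitAfterE_congr rfl).trans_le ((hT (J ω)).2.2 i hi ω)

protected lemma delay (hmono : Monotone 𝔉) (hrc : RightContinuousFilt 𝔉)
    (hhit : ∀ i, i + 1 < n → ∀ s : ℝ≥0, IsStoppingTimeE 𝔉 (hitAfterE X (B i) fun _ => s))
    (hS : IsStrategyB 𝔉 X B n σ S) (hρ : IsStoppingTimeE 𝔉 ρ) :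
    IsStrategyB 𝔉 X B n ρ (delay X B S ρ) := by
  refine ⟨fun i hi => ?_, fun _ => le_rfl, fun i _ ω => le_max_right _ _⟩
  induction i with
  | zero => exact hρ
  | succ i ih => exact (hS.1 _ hi).max ((ih (by omega)).hitAfterE hmono hrc (hhit i hi))

lemma delay_eq (hS : IsStrategyB 𝔉 X B n σ S) (h : ρ ω = S 0 ω) :
    ∀ i < n, delay X B S ρ i ω = S i ω
  | 0, _ => h
  | i + 1, hi => max_eq_left <| by
      rw [hitAfterE_congr (hS.delay_eq h i (by omega))]
      exact hS.2.2 i hi ω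

lemma tendsto_delay (hS : IsStrategyB 𝔉 X B n σ S) {d : ℕ → Ω → ℝ≥0∞}
    (hle : ∀ k, S 0 ω ≤ d k ω) (h : Tendsto (fun k => d k ω) atTop (𝓝 (S 0 ω))) :
    ∀ i < n, Tendsto (fun k => delay X B S (d k) i ω) atTop (𝓝 (S i ω))
  | 0, _ => h
  | i + 1, hi => by
      have hhit := tendsto_hitAfterE (X := X) (B := B i)
        (fun k => le_delay (hle k) i) (hS.tendsto_delay hle h i (by omega))
      simpa only [delay, max_eq_left (hS.2.2 i hi ω)] using
        (tendsto_const_nhds (x := S (i + 1) ω)).max hhit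

end IsStrategyB

end Strategy

section StartedValue

variable {μ : Measure Ω} {𝔉 : ℝ≥0 → MeasurableSpace Ω} {Y X U : ℝ≥0 → Ω → ℝ} {B : ℕ → Set ℝ}
  {n : ℕ} {σ ρ τ : Ω → ℝ≥0∞} {S : ℕ → Ω → ℝ≥0∞}

lemma IsRewardProcess.condExp_rewardSum_ae_eq_on [IsFiniteMeasure μ]
    (hY : IsRewardProcess μ 𝔉 Y) (h𝔉 : UsualConditions μ 𝔉) (hρ : IsStoppingTimeE 𝔉 ρ)
    {T : ℕ → Ω → ℝ≥0∞} (hS : ∀ i < n, IsStoppingTimeE 𝔉 (S i))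
    (hT : ∀ i < n, IsStoppingTimeE 𝔉 (T i)) {c : ℝ≥0∞}
    (hST : EqOn (rewardSum Y n S) (rewardSum Y n T) (ρ ⁻¹' {c})) : ∀ᵐ ω ∂μ, ρ ω = c →
      (μ[rewardSum Y n S | sigmaAt 𝔉 ρ ⊓ m0]) ω
        = (μ[rewardSum Y n T | sigmaAt 𝔉 (fun _ => c) ⊓ m0]) ω :=
  condExp_sigmaAt_ae_eq_on (A := ρ ⁻¹' {c}) hρ (isStoppingTimeE_const c)
    ⟨hρ.measurable h𝔉.mono (measurableSet_singleton c),
      hρ.measurable_of_le h𝔉.le (measurableSet_singleton c)⟩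
    (fun _ hω => hω) (hY.integrable_rewardSum h𝔉 hS) (hY.integrable_rewardSum h𝔉 hT) hST

/-- `U` is a right-continuous version of the value of the `n`-exercise problem in which the first
exercise is made at once. It is characterised at the deterministic times `c ∈ [0, ∞]` only: it
dominates the expected reward of every strategy whose first exercise is at `c`, and some strategy
attains it up to `ε`. Intersecting with `m0` matters for `c = ∞`, where `sigmaAt` contains all
sets. -/
structure IsStartedValue (μ : Measure Ω) (𝔉 : ℝ≥0 → MeasurableSpace Ω) (Y X : ℝ≥0 → Ω → ℝ)
    (B : ℕ → Set ℝ) (n : ℕ) (U : ℝ≥0 → Ω → ℝ) : Prop where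
  rightCont : ∀ ω t, ContinuousWithinAt (fun s => U s ω) (Ici t) t
  measurable_const : ∀ c : ℝ≥0∞, Measurable (evalAt U fun _ => c)
  condExp_le : ∀ c S, IsStrategyB 𝔉 X B n (fun _ => c) S → S 0 = (fun _ => c) →
    μ[rewardSum Y n S | sigmaAt 𝔉 (fun _ => c) ⊓ m0] ≤ᵐ[μ] evalAt U fun _ => c
  exists_le : ∀ c, ∀ ε > 0, ∃ S, IsStrategyB 𝔉 X B n (fun _ => c) S ∧ S 0 = (fun _ => c) ∧
    evalAt U (fun _ => c) ≤ᵐ[μ]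
      fun ω => (μ[rewardSum Y n S | sigmaAt 𝔉 (fun _ => c) ⊓ m0]) ω + ε

namespace IsStartedValue

variable [IsFiniteMeasure μ]

lemma condExp_le_of_countable (hU : IsStartedValue μ 𝔉 Y X B n U) (h𝔉 : UsualConditions μ 𝔉)
    (hY : IsRewardProcess μ 𝔉 Y)
    (hhit : ∀ i, i + 1 < n → ∀ s : ℝ≥0, IsStoppingTimeE 𝔉 (hitAfterE X (B i) fun _ => s))
    (hρ : IsStoppingTimeE 𝔉 ρ) (hc : (range ρ).Countable) (hS : IsStrategyB 𝔉 X B n ρ S)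
    (h0 : S 0 = ρ) : μ[rewardSum Y n S | sigmaAt 𝔉 ρ ⊓ m0] ≤ᵐ[μ] evalAt U ρ := by
  refine ae_of_forall_ae_eq hc fun c => ?_
  have hT : IsStrategyB 𝔉 X B n (fun _ => c) (delay X B S fun _ => c) :=
    hS.delay h𝔉.mono h𝔉.rightCont hhit (isStoppingTimeE_const c)
  filter_upwards [hY.condExp_rewardSum_ae_eq_on h𝔉 hρ hS.1 hT.1 fun ω hω =>
    (rewardSum_congr (hS.delay_eq (by rw [h0]; exact hω.symm))).symm,
    hU.condExp_le c _ hT rfl] with ω hω hle hρc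
  rw [hω hρc, evalAt_congr (τ := fun _ => c) hρc]
  exact hle

lemma exists_le_of_countable (hU : IsStartedValue μ 𝔉 Y X B n U) (h𝔉 : UsualConditions μ 𝔉)
    (hY : IsRewardProcess μ 𝔉 Y) (hρ : IsStoppingTimeE 𝔉 ρ) (hc : (range ρ).Countable)
    {ε : ℝ} (hε : 0 < ε) : ∃ S, IsStrategyB 𝔉 X B n ρ S ∧ S 0 = ρ ∧
      evalAt U ρ ≤ᵐ[μ] fun ω => (μ[rewardSum Y n S | sigmaAt 𝔉 ρ ⊓ m0]) ω + ε := by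
  choose T hT hT0 hle using fun c => hU.exists_le c ε hε
  have : Countable (range ρ) := hc
  have hJ : ∀ c : range ρ,
      MeasurableSet[sigmaAt 𝔉 fun _ => (c : ℝ≥0∞)] (rangeFactorization ρ ⁻¹' {c}) := fun c => by
    refine hρ.measurableSet_sigmaAt_of_eqOn (fun ω hω => congrArg Subtype.val hω) ?_
    convert hρ.measurable h𝔉.mono (measurableSet_singleton (c : ℝ≥0∞)) using 1
    ext ω
    exact Subtype.ext_iff
  have hS : IsStrategyB 𝔉 X B n ρ fun i ω => T (ρ ω) i ω := IsStrategyB.glue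
    (T := fun c : range ρ => T c) (fun c => isStoppingTimeE_const _) (fun c => hT c) hJ
  refine ⟨_, hS, by simp [hT0], ae_of_forall_ae_eq hc fun c => ?_⟩
  filter_upwards [hY.condExp_rewardSum_ae_eq_on h𝔉 hρ hS.1 (hT c).1 fun ω hω =>
    rewardSum_congr fun i _ => by rw [show ρ ω = c from hω], hle c] with ω hω hle hρc
  rw [hω hρc, evalAt_congr (τ := fun _ => c) hρc]
  exact hle

lemma evalAt_nonneg_of_countable (hU : IsStartedValue μ 𝔉 Y X B n U)
    (h𝔉 : UsualConditions μ 𝔉) (hY : IsRewardProcess μ 𝔉 Y)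
    (hhit : ∀ i, i + 1 < n → ∀ s : ℝ≥0, IsStoppingTimeE 𝔉 (hitAfterE X (B i) fun _ => s))
    (hρ : IsStoppingTimeE 𝔉 ρ) (hc : (range ρ).Countable) : 0 ≤ᵐ[μ] evalAt U ρ := by
  obtain ⟨S, hS, h0, -⟩ := hU.exists_le_of_countable h𝔉 hY hρ hc one_pos
  exact (condExp_nonneg (Eventually.of_forall fun ω => hY.rewardSum_nonneg)).trans
    (hU.condExp_le_of_countable h𝔉 hY hhit hρ hc hS h0)

lemma evalAt_le_condExp_of_countable (hU : IsStartedValue μ 𝔉 Y X B n U)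
    (h𝔉 : UsualConditions μ 𝔉) (hY : IsRewardProcess μ 𝔉 Y) (hρ : IsStoppingTimeE 𝔉 ρ)
    (hc : (range ρ).Countable) :
    evalAt U ρ ≤ᵐ[μ] μ[fun ω => n * (tailSup Y 0 ω).toReal | sigmaAt 𝔉 ρ ⊓ m0] := by
  refine ae_le_of_forall_pos_le_add fun ε hε => ?_
  obtain ⟨S, hS, -, hle⟩ := hU.exists_le_of_countable h𝔉 hY hρ hc hε
  filter_upwards [hle, hY.condExp_rewardSum_le h𝔉 hS.1 (fun _ _ _ => zero_le) _] with ω h h'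
  exact h.trans (by gcongr)

lemma integrable_of_countable (hU : IsStartedValue μ 𝔉 Y X B n U)
    (h𝔉 : UsualConditions μ 𝔉) (hY : IsRewardProcess μ 𝔉 Y)
    (hhit : ∀ i, i + 1 < n → ∀ s : ℝ≥0, IsStoppingTimeE 𝔉 (hitAfterE X (B i) fun _ => s))
    (hρ : IsStoppingTimeE 𝔉 ρ) (hc : (range ρ).Countable) : Integrable (evalAt U ρ) μ :=
  integrable_of_le_of_le (measurable_evalAt hU.rightCont hU.measurable_const
    (hρ.measurable_of_le h𝔉.le)).aestronglyMeasurable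
    (hU.evalAt_nonneg_of_countable h𝔉 hY hhit hρ hc)
    (hU.evalAt_le_condExp_of_countable h𝔉 hY hρ hc) (integrable_zero _ _ _) integrable_condExp

lemma tendsto_eLpNorm_evalAt_dyadicAbove (hU : IsStartedValue μ 𝔉 Y X B n U)
    (h𝔉 : UsualConditions μ 𝔉) (hY : IsRewardProcess μ 𝔉 Y)
    (hhit : ∀ i, i + 1 < n → ∀ s : ℝ≥0, IsStoppingTimeE 𝔉 (hitAfterE X (B i) fun _ => s))
    (hτ : IsStoppingTimeE 𝔉 τ) : Integrable (evalAt U τ) μ ∧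
      Tendsto (fun k => eLpNorm ((evalAt U fun ω => dyadicAbove k (τ ω)) - evalAt U τ) 1 μ)
        atTop (𝓝 0) := by
  have hd := hτ.dyadicAbove h𝔉.mono
  have hc := countable_range_dyadicAbove_comp (τ := τ)
  exact tendsto_eLpNorm_of_le_condExp ((hY.integrable_tailSup h𝔉 0).const_mul n)
    (fun k => inf_le_right) (fun k => (hU.integrable_of_countable h𝔉 hY hhit (hd k) (hc k)).1)
    (fun k => hU.evalAt_nonneg_of_countable h𝔉 hY hhit (hd k) (hc k))
    (fun k => hU.evalAt_le_condExp_of_countable h𝔉 hY (hd k) (hc k))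
    (Eventually.of_forall fun ω => tendsto_evalAt (hU.rightCont ω)
      (fun k => le_dyadicAbove k _) (tendsto_dyadicAbove _))

lemma condExp_evalAt_le (hU : IsStartedValue μ 𝔉 Y X B n U) (h𝔉 : UsualConditions μ 𝔉)
    (hY : IsRewardProcess μ 𝔉 Y)
    (hhit : ∀ i, i + 1 < n → ∀ s : ℝ≥0, IsStoppingTimeE 𝔉 (hitAfterE X (B i) fun _ => s))
    (hσ : IsStoppingTimeE 𝔉 σ) {Z : Ω → ℝ}
    (hZ : ∀ S, IsStrategyB 𝔉 X B n σ S → μ[rewardSum Y n S | sigmaAt 𝔉 σ] ≤ᵐ[μ] Z)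
    (hτ : IsStoppingTimeE 𝔉 τ) (hστ : σ ≤ τ) : μ[evalAt U τ | sigmaAt 𝔉 σ] ≤ᵐ[μ] Z := by
  obtain ⟨hint, hlim⟩ := hU.tendsto_eLpNorm_evalAt_dyadicAbove h𝔉 hY hhit hτ
  have hd := hτ.dyadicAbove h𝔉.mono
  have hc := countable_range_dyadicAbove_comp (τ := τ)
  have hσd : ∀ k, σ ≤ fun ω => dyadicAbove k (τ ω) := fun k ω =>
    (hστ ω).trans (le_dyadicAbove k _)
  have hdint : ∀ k, Integrable (evalAt U fun ω => dyadicAbove k (τ ω)) μ := fun k =>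
    hU.integrable_of_countable h𝔉 hY hhit (hd k) (hc k)
  refine le_of_forall_condExp_le_of_tendsto_eLpNorm hdint hint hlim fun k =>
    ae_le_of_forall_pos_le_add fun ε hε => ?_
  obtain ⟨S, hS, -, hle⟩ := hU.exists_le_of_countable h𝔉 hY (hd k) (hc k) hε
  filter_upwards [hZ S (hS.mono (hσd k)), condExp_le_condExp_add_of_le_condExp_add inf_le_right
    (le_inf (hσ.sigmaAt_mono (hd k) (hσd k))) (hdint k) hε.le hle] with ω hSZ hωS
  exact hωS.trans (by gcongr)

lemma condExp_rewardSum_le (hU : IsStartedValue μ 𝔉 Y X B n U) (h𝔉 : UsualConditions μ 𝔉)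
    (hY : IsRewardProcess μ 𝔉 Y) (hn : 0 < n)
    (hhit : ∀ i, i + 1 < n → ∀ s : ℝ≥0, IsStoppingTimeE 𝔉 (hitAfterE X (B i) fun _ => s))
    (hσ : IsStoppingTimeE 𝔉 σ) {Z : Ω → ℝ}
    (hZ : ∀ τ, IsStoppingTimeE 𝔉 τ → σ ≤ τ → μ[evalAt U τ | sigmaAt 𝔉 σ] ≤ᵐ[μ] Z)
    (hS : IsStrategyB 𝔉 X B n σ S) : μ[rewardSum Y n S | sigmaAt 𝔉 σ] ≤ᵐ[μ] Z := by
  let d : ℕ → Ω → ℝ≥0∞ := fun k ω => dyadicAbove k (S 0 ω)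
  have hd : ∀ k, IsStoppingTimeE 𝔉 (d k) := (hS.1 0 hn).dyadicAbove h𝔉.mono
  have hc : ∀ k, (range (d k)).Countable := fun k => countable_range_dyadicAbove_comp k (S 0)
  have hSd : ∀ k ω, S 0 ω ≤ d k ω := fun k ω => le_dyadicAbove k _
  have hσd : ∀ k, σ ≤ d k := fun k ω => (hS.2.1 ω).trans (hSd k ω)
  have hT : ∀ k, IsStrategyB 𝔉 X B n (d k) (delay X B S (d k)) := fun k =>
    hS.delay h𝔉.mono h𝔉.rightCont hhit (hd k)
  have hlim := hY.tendsto_eLpNorm_rewardSum h𝔉 (fun k => (hT k).1)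
    (fun i _ k ω => le_delay (hSd k ω) i)
    (fun i hi ω => hS.tendsto_delay (fun k => hSd k ω) (tendsto_dyadicAbove _) i hi)
  refine le_of_forall_condExp_le_of_tendsto_eLpNorm
    (fun k => hY.integrable_rewardSum h𝔉 (hT k).1) (hY.integrable_rewardSum h𝔉 hS.1) hlim
    fun k => ?_
  have hle : μ[rewardSum Y n (delay X B S (d k)) | sigmaAt 𝔉 σ]
      ≤ᵐ[μ] μ[evalAt U (d k) | sigmaAt 𝔉 σ] :=
    condExp_le_condExp_of_condExp_le inf_le_right (le_inf (hσ.sigmaAt_mono (hd k) (hσd k)))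
      (hU.integrable_of_countable h𝔉 hY hhit (hd k) (hc k))
      (hU.condExp_le_of_countable h𝔉 hY hhit (hd k) (hc k) (hT k) rfl)
  exact hle.trans (hZ _ (hd k) (hσd k))

theorem essSup_ae_eq (hU : IsStartedValue μ 𝔉 Y X B n U) (h𝔉 : UsualConditions μ 𝔉)
    (hY : IsRewardProcess μ 𝔉 Y) (hn : 0 < n)
    (hhit : ∀ i, i + 1 < n → ∀ s : ℝ≥0, IsStoppingTimeE 𝔉 (hitAfterE X (B i) fun _ => s))
    (hσ : IsStoppingTimeE 𝔉 σ) {Z Z' : Ω → ℝ} (hZ : IsEssSupFam μ (gainFamB μ Y 𝔉 X B n σ) Z)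
    (hZ' : IsEssSupFam μ {g | ∃ τ, IsStoppingTimeE 𝔉 τ ∧ (∀ ω, σ ω ≤ τ ω) ∧
      g = μ[evalAt U τ | sigmaAt 𝔉 σ]} Z') : Z =ᵐ[μ] Z' := by
  refine (hZ.2 Z' ?_).antisymm (hZ'.2 Z ?_)
  · rintro _ ⟨S, hS, rfl⟩
    exact hU.condExp_rewardSum_le h𝔉 hY hn hhit hσ (fun τ hτ h => hZ'.1 _ ⟨τ, hτ, h, rfl⟩) hS
  · rintro _ ⟨τ, hτ, h, rfl⟩
    exact hU.condExp_evalAt_le h𝔉 hY hhit hσ (fun S hS => hZ.1 _ ⟨S, hS, rfl⟩) hτ h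

end IsStartedValue

end StartedValue

section ContinuationValue

variable {μ : Measure Ω} {𝔉 : ℝ≥0 → MeasurableSpace Ω} {Y X V : ℝ≥0 → Ω → ℝ} {B : ℕ → Set ℝ}
  {m n : ℕ} {S : ℕ → Ω → ℝ≥0∞} {a t : ℝ≥0}

/-- `V` is a right-continuous adapted version of the value, after an exercise at time `t`, of the
`m` exercises still to be made, the first of which has to wait for `X` to hit `B 0`. It dominates
the expected reward of every such strategy, and some strategy attains it up to `ε`. -/
structure IsContinuationValue (μ : Measure Ω) (𝔉 : ℝ≥0 → MeasurableSpace Ω) (Y X : ℝ≥0 → Ω → ℝ)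
    (B : ℕ → Set ℝ) (m : ℕ) (V : ℝ≥0 → Ω → ℝ) : Prop where
  rightCont : ∀ ω t, ContinuousWithinAt (fun s => V s ω) (Ici t) t
  adapted : ∀ t, Measurable[𝔉 t] (V t)
  condExp_le : ∀ (t : ℝ≥0) S,
    IsStrategyB 𝔉 X (fun i => B (i + 1)) m (hitAfterE X (B 0) fun _ => t) S →
      μ[rewardSum Y m S | 𝔉 t] ≤ᵐ[μ] V t
  exists_le : ∀ (t : ℝ≥0), ∀ ε > 0, ∃ S,
    IsStrategyB 𝔉 X (fun i => B (i + 1)) m (hitAfterE X (B 0) fun _ => t) S ∧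
      V t ≤ᵐ[μ] fun ω => (μ[rewardSum Y m S | 𝔉 t]) ω + ε

lemma IsRewardProcess.measurable_rewardSum_top (hY : IsRewardProcess μ 𝔉 Y)
    (h𝔉 : UsualConditions μ 𝔉) : Measurable[⨆ t, 𝔉 t] (rewardSum Y m fun _ _ => ∞) := by
  rw [rewardSum_const]
  exact (hY.measurable_evalAt_top h𝔉).const_mul _

lemma IsRewardProcess.condExp_rewardSum_succ [IsFiniteMeasure μ] (hY : IsRewardProcess μ 𝔉 Y)
    (h𝔉 : UsualConditions μ 𝔉) (hS : ∀ i < m + 1, IsStoppingTimeE 𝔉 (S i))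
    (h0 : S 0 = fun _ => (t : ℝ≥0∞)) :
    μ[rewardSum Y (m + 1) S | 𝔉 t]
      =ᵐ[μ] fun ω => Y t ω + (μ[rewardSum Y m fun i => S (i + 1) | 𝔉 t]) ω := by
  have hY1 : rewardSum Y 1 S = Y t := by
    ext ω
    simp [rewardSum, h0, evalAt_coe]
  have hYt : Integrable (Y t) μ := hY1 ▸ hY.integrable_rewardSum h𝔉 fun i hi => hS i (by omega)
  have htail : Integrable (rewardSum Y m fun i => S (i + 1)) μ :=
    hY.integrable_rewardSum h𝔉 fun i hi => hS (i + 1) (Nat.succ_lt_succ hi)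
  have hadd := condExp_add hYt htail (𝔉 t)
  rw [condExp_of_stronglyMeasurable (h𝔉.le t) (hY.adapted t).stronglyMeasurable hYt] at hadd
  rw [rewardSum_succ, h0, evalAt_coe]
  exact hadd

lemma IsRewardProcess.condExp_rewardSum_of_start_top [IsFiniteMeasure μ]
    (hY : IsRewardProcess μ 𝔉 Y) (h𝔉 : UsualConditions μ 𝔉)
    (hS : IsStrategyB 𝔉 X B n (fun _ => ∞) S) :
    μ[rewardSum Y n S | sigmaAt 𝔉 (fun _ => ∞) ⊓ m0] = rewardSum Y n fun _ _ => ∞ := by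
  have hStop : rewardSum Y n S = rewardSum Y n fun _ _ => ∞ :=
    funext fun ω => rewardSum_congr fun i hi => top_le_iff.1 (hS.start_le i hi)
  have hle : ⨆ t, 𝔉 t ≤ sigmaAt 𝔉 (fun _ => ∞) ⊓ m0 := iSup_le fun t =>
    le_inf (le_sigmaAt h𝔉.mono (isStoppingTimeE_const _) fun _ => le_top) (h𝔉.le t)
  rw [hStop]
  exact condExp_of_stronglyMeasurable inf_le_right
    ((hY.measurable_rewardSum_top h𝔉).mono hle le_rfl).stronglyMeasurable
    (hY.integrable_rewardSum h𝔉 fun _ _ => isStoppingTimeE_const _)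

namespace IsContinuationValue

lemma le_condExp_tailSup (hV : IsContinuationValue μ 𝔉 Y X B m V) (h𝔉 : UsualConditions μ 𝔉)
    (hY : IsRewardProcess μ 𝔉 Y) (hat : a ≤ t) :
    V t ≤ᵐ[μ] μ[fun ω => m * (tailSup Y a ω).toReal | 𝔉 t] := by
  refine ae_le_of_forall_pos_le_add fun ε hε => ?_
  obtain ⟨S, hS, hle⟩ := hV.exists_le t ε hε
  have ha : ∀ i < m, ∀ ω, a ≤ S i ω := fun i hi ω =>
    (ENNReal.coe_le_coe.2 hat).trans <|
      (le_hitAfterE (τ := fun _ => (t : ℝ≥0∞))).trans (hS.start_le i hi)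
  filter_upwards [hle, hY.condExp_rewardSum_le h𝔉 hS.1 ha (𝔉 t)] with ω h h'
  exact h.trans (by gcongr)

variable [IsFiniteMeasure μ]

protected lemma ae_tendsto (hV : IsContinuationValue μ 𝔉 Y X B m V) (h𝔉 : UsualConditions μ 𝔉)
    (hY : IsRewardProcess μ 𝔉 Y) :
    ∀ᵐ ω ∂μ, Tendsto (fun t => V t ω) atTop (𝓝 (rewardSum Y m (fun _ _ => ∞) ω)) := by
  refine ae_tendsto_of_condExp_le_of_le_condExp h𝔉.mono h𝔉.le hV.rightCont
    (ξ := fun N ω => m * (tailSup Y N ω).toReal)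
    (fun N => (hY.integrable_tailSup h𝔉 N).const_mul _)
    (fun N => (hY.measurable_tailSup N).ennreal_toReal.const_mul _)
    (hY.integrable_rewardSum h𝔉 fun _ _ => isStoppingTimeE_const _)
    (hY.measurable_rewardSum_top h𝔉) ?_ (fun t => hV.condExp_le t _ isStrategyB_top)
    fun N t hNt => hV.le_condExp_tailSup h𝔉 hY hNt
  filter_upwards [hY.ae_tailSup_ne_top h𝔉] with ω h
  rw [rewardSum_const]
  exact (hY.tendsto_tailSup h).const_mul _

lemma evalAt_add_top (hV : IsContinuationValue μ 𝔉 Y X B m V) (h𝔉 : UsualConditions μ 𝔉)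
    (hY : IsRewardProcess μ 𝔉 Y) : evalAt (fun t ω => Y t ω + V t ω) (fun _ => ∞)
      =ᵐ[μ] rewardSum Y (m + 1) fun _ _ => ∞ := by
  filter_upwards [hV.ae_tendsto h𝔉 hY, hY.ae_tailSup_ne_top h𝔉] with ω hlim h
  have hle : IsBoundedUnder (· ≤ ·) atTop fun t => Y t ω :=
    isBoundedUnder_of ⟨_, fun t => hY.le_tailSup h (zero_le (a := t))⟩
  have hge : IsBoundedUnder (· ≥ ·) atTop fun t => Y t ω :=
    isBoundedUnder_of ⟨0, fun t => hY.nonneg t ω⟩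
  rw [rewardSum_succ, Pi.add_apply]
  simpa [evalAt, Pi.add_def] using limsup_add_of_tendsto hle hge hlim

lemma condExp_rewardSum_le_add (hV : IsContinuationValue μ 𝔉 Y X B m V)
    (h𝔉 : UsualConditions μ 𝔉) (hY : IsRewardProcess μ 𝔉 Y) (hm : 0 < m)
    (hS : IsStrategyB 𝔉 X B (m + 1) (fun _ => t) S) (h0 : S 0 = fun _ => (t : ℝ≥0∞)) :
    μ[rewardSum Y (m + 1) S | 𝔉 t] ≤ᵐ[μ] fun ω => Y t ω + V t ω := by
  filter_upwards [hY.condExp_rewardSum_succ h𝔉 hS.1 h0,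
    hV.condExp_le t _ (by simpa only [h0] using hS.tail hm)] with ω hω hle
  rw [hω]
  gcongr

lemma exists_add_le_condExp_rewardSum (hV : IsContinuationValue μ 𝔉 Y X B m V)
    (h𝔉 : UsualConditions μ 𝔉) (hY : IsRewardProcess μ 𝔉 Y) (t : ℝ≥0) {ε : ℝ} (hε : 0 < ε) :
    ∃ S, IsStrategyB 𝔉 X B (m + 1) (fun _ => t) S ∧ S 0 = (fun _ => (t : ℝ≥0∞)) ∧
      (fun ω => Y t ω + V t ω) ≤ᵐ[μ] fun ω => (μ[rewardSum Y (m + 1) S | 𝔉 t]) ω + ε := by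
  obtain ⟨S, hS, hle⟩ := hV.exists_le t ε hε
  obtain ⟨T, hT, hT0, rfl⟩ := hS.exists_cons (isStoppingTimeE_const _)
  refine ⟨T, hT, hT0, ?_⟩
  filter_upwards [hY.condExp_rewardSum_succ h𝔉 hT.1 hT0, hle] with ω hω hle
  rw [hω, add_assoc]
  gcongr

theorem isStartedValue_add (hV : IsContinuationValue μ 𝔉 Y X B m V) (h𝔉 : UsualConditions μ 𝔉)
    (hY : IsRewardProcess μ 𝔉 Y) (hm : 0 < m) :
    IsStartedValue μ 𝔉 Y X B (m + 1) fun t ω => Y t ω + V t ω where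
  rightCont ω t := (hY.rightCont ω t).add (hV.rightCont ω t)
  measurable_const c := by
    induction c with
    | top =>
      refine measurable_of_ae_eq ?_ (hV.evalAt_add_top h𝔉 hY)
        ((hY.measurable_rewardSum_top h𝔉).mono (iSup_le h𝔉.le) le_rfl)
      exact fun A hA => h𝔉.le 0 A (h𝔉.measurableSet_of_null A hA)
    | coe t =>
      rw [evalAt_coe]
      exact ((hY.adapted t).add (hV.adapted t)).mono (h𝔉.le t) le_rfl
  condExp_le c S hS h0 := by
    induction c with
    | top =>
      rw [hY.condExp_rewardSum_of_start_top h𝔉 hS]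
      exact (hV.evalAt_add_top h𝔉 hY).symm.le
    | coe t =>
      rw [sigmaAt_const h𝔉.mono, inf_eq_left.2 (h𝔉.le t), evalAt_coe]
      exact hV.condExp_rewardSum_le_add h𝔉 hY hm hS h0
  exists_le c ε hε := by
    induction c with
    | top =>
      refine ⟨_, isStrategyB_top, rfl, ?_⟩
      rw [hY.condExp_rewardSum_of_start_top h𝔉 (isStrategyB_top (X := X) (B := B))]
      filter_upwards [hV.evalAt_add_top h𝔉 hY] with ω hω
      rw [hω]
      exact le_add_of_nonneg_right hε.le
    | coe t =>
      rw [sigmaAt_const h𝔉.mono, inf_eq_left.2 (h𝔉.le t), evalAt_coe]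
      exact hV.exists_add_le_condExp_rewardSum h𝔉 hY t hε

end IsContinuationValue

end ContinuationValue

section EssentialSupremum

variable {μ : Measure Ω} {𝔉 : ℝ≥0 → MeasurableSpace Ω}
  {Y X V W : ℝ≥0 → Ω → ℝ} {B : ℕ → Set ℝ} {m : ℕ} {τ : Ω → ℝ≥0∞} {Z : Ω → ℝ}

lemma nonempty_gainFamB : (gainFamB μ Y 𝔉 X B m τ).Nonempty :=
  ⟨_, _, isStrategyB_top, rfl⟩

lemma measurable_of_mem_gainFamB {g : Ω → ℝ} (hg : g ∈ gainFamB μ Y 𝔉 X B m τ) :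
    Measurable[sigmaAt 𝔉 τ] g := by
  obtain ⟨S, -, rfl⟩ := hg
  exact stronglyMeasurable_condExp.measurable

variable [IsFiniteMeasure μ]

namespace IsEssSupFam

lemma aemeasurable_of_gainFamB (hZ : IsEssSupFam μ (gainFamB μ Y 𝔉 X B m τ) Z)
    (hτle : sigmaAt 𝔉 τ ≤ m0) : AEMeasurable Z μ := by
  obtain ⟨f, hf, hlub⟩ := hZ.exists_seq_isLUB nonempty_gainFamB
    fun g hg => (measurable_of_mem_gainFamB hg).mono hτle le_rfl
  exact AEMeasurable.isLUB
    (fun j => ((measurable_of_mem_gainFamB (hf j)).mono hτle le_rfl).aemeasurable) hlub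

lemma exists_isStrategyB_le (hZ : IsEssSupFam μ (gainFamB μ Y 𝔉 X B m τ) Z)
    (h𝔉 : UsualConditions μ 𝔉) (hY : IsRewardProcess μ 𝔉 Y) (hτ : IsStoppingTimeE 𝔉 τ)
    (hτle : sigmaAt 𝔉 τ ≤ m0) {ε : ℝ} (hε : 0 < ε) : ∃ S, IsStrategyB 𝔉 X B m τ S ∧
      Z ≤ᵐ[μ] fun ω => (μ[rewardSum Y m S | sigmaAt 𝔉 τ]) ω + ε := by
  obtain ⟨f, hf, hlub⟩ := hZ.exists_seq_isLUB nonempty_gainFamB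
    fun g hg => (measurable_of_mem_gainFamB hg).mono hτle le_rfl
  obtain ⟨K, hK, hlt⟩ :=
    exists_measurable_nat_sub_lt (fun j => measurable_of_mem_gainFamB (hf j)) hlub hε
  choose T hT hfT using hf
  have hKj : ∀ j, MeasurableSet[sigmaAt 𝔉 τ] (K ⁻¹' {j}) := fun j => hK (measurableSet_singleton j)
  have hS : IsStrategyB 𝔉 X B m τ fun i ω => T (K ω) i ω :=
    IsStrategyB.glue (fun _ => hτ) hT hKj
  have hgain : ∀ᵐ ω ∂μ, ∀ j, K ω = j →
      (μ[rewardSum Y m fun i ω => T (K ω) i ω | sigmaAt 𝔉 τ]) ω = f j ω := ae_all_iff.2 fun j => by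
    rw [hfT j]
    exact condExp_ae_eq_on (hY.integrable_rewardSum h𝔉 hS.1) (hY.integrable_rewardSum h𝔉 (hT j).1)
      (hKj j) (hτle _ (hKj j)) fun ω hω => rewardSum_congr fun i _ => by rw [show K ω = j from hω]
  refine ⟨_, hS, ?_⟩
  filter_upwards [hlt, hgain] with ω hω hgain
  rw [hgain _ rfl]
  exact (sub_lt_iff_lt_add.1 hω).le

lemma integrable_of_gainFamB (hZ : IsEssSupFam μ (gainFamB μ Y 𝔉 X B m τ) Z)
    (h𝔉 : UsualConditions μ 𝔉) (hY : IsRewardProcess μ 𝔉 Y) (hτ : IsStoppingTimeE 𝔉 τ)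
    (hτle : sigmaAt 𝔉 τ ≤ m0) : Integrable Z μ := by
  obtain ⟨S, hS, hle⟩ := hZ.exists_isStrategyB_le h𝔉 hY hτ hτle one_pos
  exact integrable_of_le_of_le (hZ.aemeasurable_of_gainFamB hτle).aestronglyMeasurable
    (hZ.1 _ ⟨S, hS, rfl⟩) hle integrable_condExp (integrable_condExp.add (integrable_const 1))

end IsEssSupFam

theorem isContinuationValue_of_isEssSupFam (h𝔉 : UsualConditions μ 𝔉)
    (hY : IsRewardProcess μ 𝔉 Y)
    (hhit : ∀ s : ℝ≥0, IsStoppingTimeE 𝔉 (hitAfterE X (B 0) fun _ => s))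
    (hfin : ∀ s : ℝ≥0, ∀ᵐ ω ∂μ, hitAfterE X (B 0) (fun _ => s) ω < ∞)
    (hW : ∀ t : ℝ≥0, IsEssSupFam μ
      (gainFamB μ Y 𝔉 X (fun i => B (i + 1)) m (hitAfterE X (B 0) fun _ => t)) (W t))
    (hVrc : ∀ ω t, ContinuousWithinAt (fun s => V s ω) (Ici t) t)
    (hV : ∀ t, V t =ᵐ[μ] μ[W t | 𝔉 t]) : IsContinuationValue μ 𝔉 Y X B m V := by
  have hρle : ∀ t : ℝ≥0, sigmaAt 𝔉 (hitAfterE X (B 0) fun _ => (t : ℝ≥0∞)) ≤ m0 := fun t =>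
    (hhit t).sigmaAt_le h𝔉.le h𝔉.measurableSet_of_null (hfin t)
  have hle : ∀ t : ℝ≥0, 𝔉 t ≤ sigmaAt 𝔉 (hitAfterE X (B 0) fun _ => (t : ℝ≥0∞)) := fun t =>
    le_sigmaAt h𝔉.mono (hhit t) fun _ => le_hitAfterE
  have hWint : ∀ t, Integrable (W t) μ := fun t =>
    (hW t).integrable_of_gainFamB h𝔉 hY (hhit t) (hρle t)
  refine ⟨hVrc, fun t => ?_, fun t S hS => ?_, fun t ε hε => ?_⟩
  · exact measurable_of_ae_eq
      (fun A hA => h𝔉.mono zero_le A (h𝔉.measurableSet_of_null A hA)) (hV t)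
      stronglyMeasurable_condExp.measurable
  · exact (condExp_le_condExp_of_condExp_le (hρle t) (fun _ => hle t) (hWint t)
      ((hW t).1 _ ⟨S, hS, rfl⟩)).trans (hV t).symm.le
  · obtain ⟨S, hS, hWS⟩ := (hW t).exists_isStrategyB_le h𝔉 hY (hhit t) (hρle t) hε
    exact ⟨S, hS, (hV t).le.trans <| condExp_le_condExp_add_of_le_condExp_add (hρle t)
      (fun _ => hle t) (hWint t) hε.le hWS⟩

end EssentialSupremum

theorem main_reduction_second_model_general
    {μ : Measure Ω} [IsFiniteMeasure μ] {𝔉 : ℝ≥0 → MeasurableSpace Ω} (h𝔉 : UsualConditions μ 𝔉)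
    {Y : ℝ≥0 → Ω → ℝ} (hY : IsRewardProcess μ 𝔉 Y) {n : ℕ} (hn : 2 ≤ n)
    {X : ℝ≥0 → Ω → ℝ} {B : ℕ → Set ℝ}
    (hhit : ∀ i, i + 1 < n → ∀ s : ℝ≥0, IsStoppingTimeE 𝔉 (hitAfterE X (B i) fun _ => s))
    (hfin : ∀ s : ℝ≥0, ∀ᵐ ω ∂μ, hitAfterE X (B 0) (fun _ => s) ω < ∞)
    {W : ℝ≥0 → Ω → ℝ}
    (hW : ∀ t : ℝ≥0, IsEssSupFam μ
      (gainFamB μ Y 𝔉 X (fun i => B (i + 1)) (n - 1) (hitAfterE X (B 0) fun _ => t)) (W t))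
    {Zr : ℝ≥0 → Ω → ℝ} (hZrc : ∀ ω t, ContinuousWithinAt (fun s => Zr s ω) (Ici t) t)
    (hZmod : ∀ t, Zr t =ᵐ[μ] μ[W t | 𝔉 t]) {σ : Ω → ℝ≥0∞} (hσ : IsStoppingTimeE 𝔉 σ) :
    (∀ t, Measurable[𝔉 t] fun ω => Y t ω + Zr t ω) ∧
    (∀ ω t, ContinuousWithinAt (fun s => Y s ω + Zr s ω) (Ici t) t) ∧
    ∀ Z Z' : Ω → ℝ, IsEssSupFam μ (gainFamB μ Y 𝔉 X B n σ) Z →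
      IsEssSupFam μ
        {g | ∃ τ : Ω → ℝ≥0∞, IsStoppingTimeE 𝔉 τ ∧ (∀ ω, σ ω ≤ τ ω) ∧
          g = μ[evalAt (fun t ω => Y t ω + Zr t ω) τ | sigmaAt 𝔉 σ]} Z' →
      Z =ᵐ[μ] Z' := by
  obtain ⟨m, rfl⟩ : ∃ m, n = m + 1 := ⟨n - 1, by omega⟩
  have hV := isContinuationValue_of_isEssSupFam h𝔉 hY (hhit 0 (by omega)) hfin hW hZrc hZmod
  have hU := hV.isStartedValue_add h𝔉 hY (by omega)
  exact ⟨fun t => (hY.adapted t).add (hV.adapted t), hU.rightCont,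
    fun Z Z' hZ hZ' => hU.essSup_ae_eq h𝔉 hY m.succ_pos hhit hσ hZ hZ'⟩

/-- **main reduction theorem, second model.** `Y_n = Y + Z̄^{B,r}_{n-1}` is
`𝔉`-adapted and right-continuous, and for every `𝔉`-stopping time `σ`,
`Z_n^B(σ) = esssup_{τ ∈ 𝒮_σ} 𝔼(Y_n(τ)|𝓕_σ)` a.s.  Here `W t` is a version of
`Z_{n-1}^{LB}(ρ_t^{B₁})` and `Zr` is a right-continuous modification of
`t ↦ 𝔼(W t|𝓕_t)`. -/
theorem main_reduction_second_model
    (μ : Measure Ω) [IsProbabilityMeasure μ]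
    (𝔉 : ℝ≥0 → MeasurableSpace Ω) (hle : ∀ t, 𝔉 t ≤ m0) (hmono : Monotone 𝔉)
    (hrc : RightContinuousFilt 𝔉)
    (hnull : ∀ A : Set Ω, μ A = 0 → MeasurableSet[𝔉 0] A)
    (Y : ℝ≥0 → Ω → ℝ) (hadapt : ∀ t, Measurable[𝔉 t] (Y t))
    (hYpos : ∀ t ω, 0 ≤ Y t ω)
    (hYrc : ∀ ω t, ContinuousWithinAt (fun s => Y s ω) (Set.Ici t) t)
    (hYint : ∫⁻ ω, ⨆ t : ℝ≥0, ENNReal.ofReal (Y t ω) ∂μ < ∞)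
    (n : ℕ) (hn : 2 ≤ n)
    (X : ℝ≥0 → Ω → ℝ) (hXad : ∀ t, Measurable[𝔉 t] (X t))
    (hXrc : ∀ ω t, ContinuousWithinAt (fun s => X s ω) (Set.Ici t) t)
    (B : ℕ → Set ℝ) (hB : ∀ i, i + 1 < n → MeasurableSet (B i))
    (hhit : ∀ i, i + 1 < n → ∀ s : ℝ≥0,
      IsStoppingTimeE 𝔉 (hitAfterE X (B i) (fun _ => (s : ℝ≥0∞))))
    (hfin : ∀ i, i + 1 < n → ∀ s : ℝ≥0,
      ∀ᵐ ω ∂μ, hitAfterE X (B i) (fun _ => (s : ℝ≥0∞)) ω < ∞)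
    (W : ℝ≥0 → Ω → ℝ)
    (hW : ∀ t : ℝ≥0, IsEssSupFam μ
      (gainFamB μ Y 𝔉 X (fun i => B (i + 1)) (n - 1)
        (hitAfterE X (B 0) (fun _ => (t : ℝ≥0∞)))) (W t))
    (Zr : ℝ≥0 → Ω → ℝ)
    (hZrc : ∀ ω t, ContinuousWithinAt (fun s => Zr s ω) (Set.Ici t) t)
    (hZmod : ∀ t : ℝ≥0, Zr t =ᵐ[μ] μ[W t | 𝔉 t])
    (σ : Ω → ℝ≥0∞) (hσ : IsStoppingTimeE 𝔉 σ) :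
    (∀ t, Measurable[𝔉 t] (fun ω => Y t ω + Zr t ω)) ∧
    (∀ ω t, ContinuousWithinAt (fun s => Y s ω + Zr s ω) (Set.Ici t) t) ∧
    (∀ Z Z' : Ω → ℝ, IsEssSupFam μ (gainFamB μ Y 𝔉 X B n σ) Z →
      IsEssSupFam μ
        {g | ∃ τ : Ω → ℝ≥0∞, IsStoppingTimeE 𝔉 τ ∧ (∀ ω, σ ω ≤ τ ω) ∧
          g = μ[evalAt (fun t ω => Y t ω + Zr t ω) τ | sigmaAt 𝔉 σ]} Z' →
      Z =ᵐ[μ] Z') :=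
  main_reduction_second_model_general ⟨hle, hmono, hrc, hnull⟩ ⟨hadapt, hYpos, hYrc, hYint⟩ hn hhit
    (hfin 0 hn) hW hZrc hZmod hσ

end
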